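/- arXiv:1309.6013 — 3 statements merged into one kernel-verified Lean document; each statement's English description precedes it below -/
import Mathlib

section
/- Let M ∈ ℝ^{d1×d2}, α > 0 and r a positive integer. If rank(M) ≤ r and ‖M‖_∞ ≤ α, then ‖M‖_max ≤ α √r and ‖M‖_* ≤ α √r · √(d1 d2); that is, M belongs to K_max(α, α√r) and K_max(α, α√r) ⊆ K_*(α, r). -/
open scoped BigOperators
open Matrix

/-- The elementwise `ℓ∞`-norm of a matrix: `max_{k,l} |M_{k,l}|`. -/
noncomputable def linfNorm {d1 d2 : ℕ} (M : Matrix (Fin d1) (Fin d2) ℝ) : ℝ :=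
  ⨆ k, ⨆ l, |M k l|

/-- The trace-norm (nuclear norm) of a real matrix: the sum of its singular values,
i.e. the square roots of the eigenvalues of `M * Mᵀ`. -/
noncomputable def traceNorm {d1 d2 : ℕ} (M : Matrix (Fin d1) (Fin d2) ℝ) : ℝ :=
  ∑ i, Real.sqrt ((Matrix.isHermitian_mul_conjTranspose_self M).eigenvalues i)

/-- The largest `ℓ₂`-norm of a row of a matrix (the `(2,∞)` operator norm). -/
noncomputable def rowMaxNorm {n k : ℕ} (U : Matrix (Fin n) (Fin k) ℝ) : ℝ :=
  ⨆ i, Real.sqrt (∑ j, (U i j) ^ 2)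

/-- The max-norm of a real matrix: the infimum of `‖U‖_{2,∞} ‖V‖_{2,∞}` over all
factorizations `M = U * Vᵀ`. -/
noncomputable def maxNorm {d1 d2 : ℕ} (M : Matrix (Fin d1) (Fin d2) ℝ) : ℝ :=
  sInf { c : ℝ | ∃ (k : ℕ) (U : Matrix (Fin d1) (Fin k) ℝ) (V : Matrix (Fin d2) (Fin k) ℝ),
    0 < k ∧ M = U * Vᵀ ∧ c = rowMaxNorm U * rowMaxNorm V }

lemma aux_scalar (m : ℕ) (g : ℝ) (hg : 0 ≤ g)
    (h : ∀ t : ℝ, 0 < t → t < 1 → (1 - t) ^ m * (1 - t + t * g) ≤ 1) : g ≤ m + 1 := by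
  by_contra hcon
  push Not at hcon
  set δ := g - (m + 1) with hδ
  have hδ0 : 0 < δ := by linarith
  have hm : (0 : ℝ) ≤ m := by positivity
  have hg1 : 0 < g - 1 + 1 := by linarith
  have hden : 0 < (m * (g - 1) + δ + 1) := by nlinarith
  set t := δ / (2 * (m * (g - 1) + δ + 1)) with ht
  have ht0 : 0 < t := by positivity
  have hteq : t * (2 * (m * (g - 1) + δ + 1)) = δ := by
    rw [ht]; field_simp
  have hg2 : 0 ≤ m * (g - 1) := by nlinarith
  have ht1 : t < 1 := by
    rw [ht, div_lt_one (by positivity)]; linarith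
  have hb : 1 + (m : ℝ) * (-t) ≤ (1 + -t) ^ m :=
    one_add_mul_le_pow (by linarith) m
  have h1 := h t ht0 ht1
  have h2 : 0 ≤ 1 - t + t * g := by nlinarith
  have h3 : (1 - m * t) * (1 - t + t * g) ≤ 1 := by
    refine le_trans ?_ h1
    apply mul_le_mul_of_nonneg_right _ h2
    have : (1 + -t) = 1 - t := by ring
    rw [this] at hb; linarith
  -- t * (δ - m (g-1) t) ≤ 0
  have h4 : t * (δ - m * (g - 1) * t) ≤ 0 := by rw [hδ]; nlinarith
  have h5 : 0 < δ - m * (g - 1) * t := by nlinarith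
  nlinarith [mul_pos ht0 h5]

/-- The weighted Gram matrix. -/
noncomputable def auxGram {d k : ℕ} (U : Matrix (Fin d) (Fin k) ℝ) (p : Fin d → ℝ) :
    Matrix (Fin k) (Fin k) ℝ := Uᵀ * Matrix.diagonal p * U

lemma auxGram_posSemidef {d k : ℕ} (U : Matrix (Fin d) (Fin k) ℝ) (p : Fin d → ℝ)
    (hp : ∀ i, 0 ≤ p i) : (auxGram U p).PosSemidef := by
  have := (Matrix.PosSemidef.diagonal (d := p) hp).conjTranspose_mul_mul_same U
  simpa [auxGram, conjTranspose_eq_transpose_of_trivial] using this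

lemma auxGram_det_line {d k : ℕ} (U : Matrix (Fin d) (Fin k) ℝ) (p : Fin d → ℝ)
    (hdet : IsUnit (auxGram U p).det) (i : Fin d) (t : ℝ) (ht1 : t < 1) :
    (auxGram U ((1 - t) • p + t • Pi.single i 1)).det =
      (1 - t) ^ k * ((auxGram U p).det * (1 + t / (1 - t) * (U i ⬝ᵥ (auxGram U p)⁻¹ *ᵥ U i))) := by
  have hne : 1 - t ≠ 0 := by linarith
  have e : auxGram U ((1 - t) • p + t • Pi.single i 1) =
      (1 - t) • (auxGram U p + replicateCol Unit ((t / (1 - t)) • U i) * replicateRow Unit (U i)) := by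
    ext a b
    simp only [auxGram, Matrix.mul_apply, Matrix.diagonal_apply, Matrix.smul_apply, Matrix.add_apply,
      Matrix.transpose_apply, replicateCol_apply, replicateRow_apply]
    simp [mul_add, add_mul, Finset.sum_add_distrib, Finset.mul_sum, Pi.single_apply]
    congr 1
    · exact Finset.sum_congr rfl fun x _ => by ring
    · field_simp
  have e2 : (1 + replicateRow Unit (U i) * (auxGram U p)⁻¹ *
      replicateCol Unit ((t / (1 - t)) • U i)).det =
      1 + t / (1 - t) * (U i ⬝ᵥ (auxGram U p)⁻¹ *ᵥ U i) := by
    rw [det_unique, ← replicateRow_vecMul, Matrix.dotProduct_mulVec]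
    simp only [Matrix.add_apply, Matrix.one_apply_eq, Matrix.mul_apply, replicateRow_apply,
      replicateCol_apply, dotProduct, Finset.mul_sum, Pi.smul_apply, smul_eq_mul]
    congr 1
    exact Finset.sum_congr rfl fun x _ => by ring
  rw [e, det_smul, det_add_replicateCol_mul_replicateRow hdet, Fintype.card_fin, e2]

lemma aux_kw {d k : ℕ} (hk : 0 < k) (U : Matrix (Fin d) (Fin k) ℝ)
    (hU : Function.Injective U.mulVec) :
    ∃ p ∈ stdSimplex ℝ (Fin d), IsUnit (auxGram U p).det ∧
      ∀ i, U i ⬝ᵥ (auxGram U p)⁻¹ *ᵥ U i ≤ k := by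
  have hd : 0 < d := by
    rcases Nat.eq_zero_or_pos d with rfl | h
    · have := congrFun (@hU 0 1 (by ext i; exact i.elim0)) ⟨0, hk⟩
      simp at this
    · exact h
  have hcont : ContinuousOn (fun p => (auxGram U p).det) (stdSimplex ℝ (Fin d)) := by
    apply Continuous.continuousOn
    unfold auxGram
    fun_prop
  have hne : (stdSimplex ℝ (Fin d)).Nonempty := ⟨_, single_mem_stdSimplex ℝ (⟨0, hd⟩ : Fin d)⟩
  obtain ⟨p, hp, hmax⟩ := (isCompact_stdSimplex ℝ (Fin d)).exists_isMaxOn hne hcont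
  have hmax' : ∀ q ∈ stdSimplex ℝ (Fin d), (auxGram U q).det ≤ (auxGram U p).det := hmax
  have hpos : 0 < (auxGram U p).det := by
    refine lt_of_lt_of_le ?_ (hmax' (fun _ => (d : ℝ)⁻¹) ⟨fun _ => by positivity, ?_⟩)
    · have h1 := (Matrix.PosDef.diagonal (d := fun _ : Fin d => (d : ℝ)⁻¹)
        (fun _ => by positivity)).conjTranspose_mul_mul_same hU
      simpa [auxGram, conjTranspose_eq_transpose_of_trivial] using h1.det_pos
    · simp; field_simp
  have hunit : IsUnit (auxGram U p).det := hpos.ne'.isUnit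
  refine ⟨p, hp, hunit, fun i => ?_⟩
  obtain ⟨m, rfl⟩ : ∃ m, k = m + 1 := ⟨k - 1, by omega⟩
  push_cast
  apply aux_scalar
  · have := (auxGram_posSemidef U p hp.1).inv.dotProduct_mulVec_nonneg (U i)
    simpa using this
  · intro t ht0 ht1
    have hq : (1 - t) • p + t • Pi.single i 1 ∈ stdSimplex ℝ (Fin d) :=
      convex_stdSimplex ℝ (Fin d) hp (single_mem_stdSimplex ℝ i) (by linarith) ht0.le (by ring)
    have h := hmax' _ hq
    rw [auxGram_det_line U p hunit i t ht1] at h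
    have hne : 1 - t ≠ 0 := by linarith
    set g := U i ⬝ᵥ (auxGram U p)⁻¹ *ᵥ U i
    have e : (1 - t) ^ (m + 1) * ((auxGram U p).det * (1 + t / (1 - t) * g)) =
        (auxGram U p).det * ((1 - t) ^ m * (1 - t + t * g)) := by
      field_simp
      ring
    rw [e] at h
    exact le_of_mul_le_mul_left (by linarith) hpos

lemma aux_factor {d1 d2 : ℕ} (M : Matrix (Fin d1) (Fin d2) ℝ) :
    ∃ (U : Matrix (Fin d1) (Fin M.rank) ℝ) (V : Matrix (Fin d2) (Fin M.rank) ℝ),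
      Function.Injective U.mulVec ∧ M = U * Vᵀ := by
  let b : Module.Basis (Fin M.rank) ℝ (LinearMap.range M.mulVecLin) :=
    Module.finBasisOfFinrankEq ℝ _ rfl
  let c : Fin d2 → LinearMap.range M.mulVecLin := fun l => ⟨M *ᵥ Pi.single l 1, ⟨_, rfl⟩⟩
  refine ⟨Matrix.of fun i j => (b j : Fin d1 → ℝ) i, Matrix.of fun l j => b.repr (c l) j, ?_, ?_⟩
  · rw [Matrix.mulVec_injective_iff]
    exact b.linearIndependent.map' (Submodule.subtype _) (Submodule.ker_subtype _)
  · ext i l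
    have h := congrArg (fun x : LinearMap.range M.mulVecLin => (x : Fin d1 → ℝ) i) (b.sum_repr (c l))
    have h2 : ((c l : LinearMap.range M.mulVecLin) : Fin d1 → ℝ) i = M i l := by simp [c]
    simp only [h2] at h
    rw [Matrix.mul_apply, ← h, Submodule.coe_sum, Finset.sum_apply]
    exact Finset.sum_congr rfl fun x _ => by simp [mul_comm]

lemma row_le_rowMaxNorm {n k : ℕ} (U : Matrix (Fin n) (Fin k) ℝ) (i : Fin n) :
    Real.sqrt (∑ j, (U i j) ^ 2) ≤ rowMaxNorm U :=
  le_ciSup (f := fun i => Real.sqrt (∑ j, (U i j) ^ 2)) (Set.finite_range _).bddAbove i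

lemma rowMaxNorm_nonneg {n k : ℕ} (U : Matrix (Fin n) (Fin k) ℝ) : 0 ≤ rowMaxNorm U :=
  Real.iSup_nonneg fun _ => Real.sqrt_nonneg _

lemma rowMaxNorm_le {n k : ℕ} (U : Matrix (Fin n) (Fin k) ℝ) (a : ℝ) (ha : 0 ≤ a)
    (h : ∀ i, ∑ j, (U i j) ^ 2 ≤ a ^ 2) : rowMaxNorm U ≤ a :=
  Real.iSup_le (fun i => Real.sqrt_le_iff.2 ⟨ha, h i⟩) ha

lemma abs_le_linfNorm {d1 d2 : ℕ} (M : Matrix (Fin d1) (Fin d2) ℝ) (i : Fin d1) (j : Fin d2) :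
    |M i j| ≤ linfNorm M :=
  (le_ciSup (f := fun j => |M i j|) (Set.finite_range _).bddAbove j).trans
    (le_ciSup (f := fun i => ⨆ j, |M i j|) (Set.finite_range _).bddAbove i)

open scoped MatrixOrder in
lemma aux_psd {k : ℕ} {A : Matrix (Fin k) (Fin k) ℝ} (hA : A.PosSemidef) :
    ∃ C : Matrix (Fin k) (Fin k) ℝ, A = Cᴴ * C := by
  obtain ⟨C, hC⟩ := CStarAlgebra.nonneg_iff_eq_star_mul_self.1 hA.nonneg
  exact ⟨C, hC⟩

lemma aux_exists {d1 d2 : ℕ} (M : Matrix (Fin d1) (Fin d2) ℝ) (α : ℝ) (r : ℕ) (hα : 0 ≤ α)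
    (hrank : M.rank ≤ r) (hinf : linfNorm M ≤ α) :
    ∃ (k : ℕ) (U : Matrix (Fin d1) (Fin k) ℝ) (V : Matrix (Fin d2) (Fin k) ℝ),
      0 < k ∧ M = U * Vᵀ ∧ rowMaxNorm U * rowMaxNorm V ≤ α * Real.sqrt r := by
  obtain ⟨U, V, hU, hM⟩ := aux_factor M
  rcases Nat.eq_zero_or_pos M.rank with h0 | hk
  · refine ⟨1, 0, 0, one_pos, ?_, ?_⟩
    · rw [hM]; ext i j
      have : IsEmpty (Fin M.rank) := by rw [h0]; infer_instance
      simp [Matrix.mul_apply]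
    · have : rowMaxNorm (0 : Matrix (Fin d1) (Fin 1) ℝ) ≤ 0 := rowMaxNorm_le _ _ le_rfl (by simp)
      have h2 := rowMaxNorm_nonneg (0 : Matrix (Fin d1) (Fin 1) ℝ)
      rw [le_antisymm this h2, zero_mul]; positivity
  generalize M.rank = k at *
  obtain ⟨p, hp, hunit, hle⟩ := aux_kw hk U hU
  obtain ⟨C, hC⟩ : ∃ C : Matrix (Fin k) (Fin k) ℝ, auxGram U p = Cᵀ * C := by
    have := (auxGram_posSemidef U p hp.1)
    obtain ⟨C, hC⟩ := aux_psd this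
    exact ⟨C, by simpa [conjTranspose_eq_transpose_of_trivial] using hC⟩
  have hCu : IsUnit C.det := by
    rw [hC, det_mul] at hunit
    exact isUnit_of_mul_isUnit_right hunit
  have hrow : ∀ {n : ℕ} (W : Matrix (Fin n) (Fin k) ℝ) (B : Matrix (Fin k) (Fin k) ℝ) (i : Fin n),
      ∑ j, ((W * B) i j) ^ 2 = W i ⬝ᵥ (B * Bᵀ) *ᵥ W i := by
    intro n W B i
    rw [← Matrix.mulVec_mulVec, Matrix.dotProduct_mulVec, Matrix.mulVec_transpose]
    simp only [dotProduct, sq]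
    rfl
  refine ⟨k, U * C⁻¹, V * Cᵀ, hk, ?_, ?_⟩
  · rw [Matrix.transpose_mul, Matrix.transpose_transpose, Matrix.mul_assoc,
      Matrix.nonsing_inv_mul_cancel_left _ _ hCu]
    exact hM
  · rw [mul_comm]
    apply mul_le_mul _ _ (rowMaxNorm_nonneg _) hα
    · apply rowMaxNorm_le _ _ hα
      intro l
      rw [hrow, Matrix.transpose_transpose, ← hC]
      have e : V l ⬝ᵥ auxGram U p *ᵥ V l = ∑ i, p i * (M i l) ^ 2 := by
        have hMl : ∀ i, M i l = (U *ᵥ V l) i := by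
          intro i; rw [hM]; rfl
        rw [auxGram, ← Matrix.mulVec_mulVec, ← Matrix.mulVec_mulVec, Matrix.dotProduct_mulVec,
          Matrix.vecMul_transpose]
        simp only [dotProduct, Matrix.mulVec_diagonal, hMl]
        exact Finset.sum_congr rfl fun x _ => by ring
      rw [e]
      calc ∑ i, p i * (M i l) ^ 2 ≤ ∑ i, p i * α ^ 2 := by
            apply Finset.sum_le_sum
            intro i _
            apply mul_le_mul_of_nonneg_left _ (hp.1 i)
            rw [← sq_abs]
            exact pow_le_pow_left₀ (abs_nonneg _) ((abs_le_linfNorm M i l).trans hinf) 2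
        _ = α ^ 2 := by rw [← Finset.sum_mul, hp.2, one_mul]
    · apply rowMaxNorm_le _ _ (Real.sqrt_nonneg _)
      intro i
      rw [hrow, Real.sq_sqrt (by positivity)]
      have : C⁻¹ * C⁻¹ᵀ = (auxGram U p)⁻¹ := by
        rw [hC, Matrix.mul_inv_rev, Matrix.transpose_nonsing_inv]
      rw [this]
      exact (hle i).trans (by exact_mod_cast hrank)

lemma traceNorm_le_aux {d1 d2 k : ℕ} (U : Matrix (Fin d1) (Fin k) ℝ) (V : Matrix (Fin d2) (Fin k) ℝ) :
    traceNorm (U * Vᵀ) ≤ Real.sqrt (∑ i, ∑ j, U i j ^ 2) * Real.sqrt (∑ i, ∑ j, V i j ^ 2) := by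
  set N := U * Vᵀ with hN
  set hH := Matrix.isHermitian_mul_conjTranspose_self N
  let e := hH.eigenvectorBasis
  let s : Fin d1 → ℝ := fun i => Real.sqrt (hH.eigenvalues i)
  have hev : ∀ i, 0 ≤ hH.eigenvalues i :=
    (Matrix.posSemidef_self_mul_conjTranspose N).eigenvalues_nonneg
  have hss : ∀ i, s i * s i = hH.eigenvalues i := fun i => Real.mul_self_sqrt (hev i)
  let f : Fin d1 → EuclideanSpace ℝ (Fin d2) := fun i => WithLp.toLp 2 ((s i)⁻¹ • (Nᵀ *ᵥ ⇑(e i)))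
  have hee : ∀ i j, (⇑(e i) : Fin d1 → ℝ) ⬝ᵥ ⇑(e j) = if i = j then 1 else 0 := by
    intro i j
    have := orthonormal_iff_ite.1 e.orthonormal i j
    rw [← this, EuclideanSpace.inner_eq_star_dotProduct, dotProduct_comm]
    simp
  have hgram : ∀ i j, (Nᵀ *ᵥ ⇑(e i)) ⬝ᵥ (Nᵀ *ᵥ ⇑(e j)) = if i = j then s i * s i else 0 := by
    intro i j
    have h1 : (N * Nᵀ) *ᵥ ⇑(e j) = hH.eigenvalues j • ⇑(e j) := by
      have := hH.mulVec_eigenvectorBasis j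
      exact this
    rw [Matrix.mulVec_transpose, ← Matrix.dotProduct_mulVec, Matrix.mulVec_mulVec, h1,
      dotProduct_smul, hee, smul_eq_mul, hss]
    split_ifs with h
    · rw [h, mul_one]
    · simp
  have hinner : ∀ i j, inner ℝ (f i) (f j) = (s i)⁻¹ * (s j)⁻¹ * if i = j then s i * s i else 0 := by
    intro i j
    rw [EuclideanSpace.inner_eq_star_dotProduct, ← hgram, dotProduct_comm]
    simp [f, dotProduct_smul, smul_dotProduct]
    ring
  have horth : Orthonormal ℝ (fun i : {i // s i ≠ 0} => f i) := by
    rw [orthonormal_iff_ite]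
    rintro ⟨i, hi⟩ ⟨j, hj⟩
    rw [hinner]
    simp only [Subtype.mk.injEq]
    split_ifs with h
    · subst h; field_simp
    · simp
  have hbessel : ∀ x : EuclideanSpace ℝ (Fin d2), ∑ i, (inner ℝ (f i) x) ^ 2 ≤ ‖x‖ ^ 2 := by
    intro x
    have h := horth.sum_inner_products_le (x := x) (s := Finset.univ)
    refine le_trans (le_of_eq ?_) h
    simp only [Real.norm_eq_abs, sq_abs]
    have hz : ∀ i, s i = 0 → f i = 0 := by
      intro i hi
      simp [f, hi]
    rw [← Finset.sum_subtype (Finset.univ.filter fun i => s i ≠ 0) (by simp)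
      (fun i => (inner ℝ (f i) x) ^ 2)]
    symm
    apply Finset.sum_subset (Finset.subset_univ _)
    intro i _ hi
    rw [hz i (by simpa using hi)]
    simp
  have hsum : traceNorm N = ∑ i, ∑ j, inner ℝ (e i) (WithLp.toLp 2 (Uᵀ j)) *
      inner ℝ (f i) (WithLp.toLp 2 (Vᵀ j)) := by
    unfold traceNorm
    apply Finset.sum_congr rfl
    intro i _
    have h1 : s i = (s i)⁻¹ * (s i * s i) := by
      by_cases h : s i = 0
      · simp [h]
      · field_simp
    change s i = _
    have h2 := hgram i i
    rw [if_pos rfl] at h2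
    rw [h1, ← h2]
    have h3 : Nᵀ *ᵥ ⇑(e i) = V *ᵥ (Uᵀ *ᵥ ⇑(e i)) := by
      rw [hN, Matrix.transpose_mul, Matrix.transpose_transpose, Matrix.mulVec_mulVec]
    nth_rewrite 2 [h3]
    rw [Matrix.dotProduct_mulVec, ← Matrix.mulVec_transpose, dotProduct, Finset.mul_sum]
    apply Finset.sum_congr rfl
    intro j _
    rw [EuclideanSpace.inner_eq_star_dotProduct, EuclideanSpace.inner_eq_star_dotProduct]
    simp only [f, star_trivial, dotProduct_smul, smul_eq_mul, Matrix.mulVec]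
    ring
  have hcols : ∀ {n : ℕ} (W : Matrix (Fin n) (Fin k) ℝ),
      ∑ j, ‖(WithLp.toLp 2 (Wᵀ j) : EuclideanSpace ℝ (Fin n))‖ ^ 2 = ∑ i, ∑ j, W i j ^ 2 := by
    intro n W
    rw [Finset.sum_comm]
    simp [EuclideanSpace.norm_sq_eq]
  rw [hsum, ← Finset.sum_product']
  refine (Real.sum_mul_le_sqrt_mul_sqrt _ _ _).trans ?_
  apply mul_le_mul _ _ (Real.sqrt_nonneg _) (Real.sqrt_nonneg _)
  · apply Real.sqrt_le_sqrt
    rw [Finset.sum_product, Finset.sum_comm, ← hcols]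
    apply Finset.sum_le_sum
    intro j _
    rw [← e.sum_sq_norm_inner_right]
    simp
  · apply Real.sqrt_le_sqrt
    rw [Finset.sum_product, Finset.sum_comm, ← hcols]
    apply Finset.sum_le_sum
    intro j _
    have hj := hbessel (WithLp.toLp 2 (Vᵀ j))
    exact hj

lemma frob_le {n k : ℕ} (U : Matrix (Fin n) (Fin k) ℝ) :
    Real.sqrt (∑ i, ∑ j, U i j ^ 2) ≤ Real.sqrt n * rowMaxNorm U := by
  rw [← Real.sqrt_sq (rowMaxNorm_nonneg U), ← Real.sqrt_mul (by positivity)]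
  apply Real.sqrt_le_sqrt
  calc ∑ i, ∑ j, U i j ^ 2 ≤ ∑ i : Fin n, rowMaxNorm U ^ 2 := by
        apply Finset.sum_le_sum
        intro i _
        exact (Real.sqrt_le_iff.1 (row_le_rowMaxNorm U i)).2
    _ = _ := by simp

lemma traceNorm_le {d1 d2 : ℕ} (N : Matrix (Fin d1) (Fin d2) ℝ) (R : ℝ) (hR : maxNorm N ≤ R) :
    traceNorm N ≤ R * Real.sqrt (d1 * d2) := by
  rw [Real.sqrt_mul (by positivity)]
  set D := Real.sqrt d1 * Real.sqrt d2 with hD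
  have hD0 : 0 ≤ D := by positivity
  have hall : ∀ c ∈ { c : ℝ | ∃ (k : ℕ) (U : Matrix (Fin d1) (Fin k) ℝ)
      (V : Matrix (Fin d2) (Fin k) ℝ), 0 < k ∧ N = U * Vᵀ ∧ c = rowMaxNorm U * rowMaxNorm V },
      traceNorm N ≤ c * D := by
    rintro c ⟨k, U, V, -, rfl, rfl⟩
    refine (traceNorm_le_aux U V).trans ?_
    calc _ ≤ (Real.sqrt d1 * rowMaxNorm U) * (Real.sqrt d2 * rowMaxNorm V) :=
          mul_le_mul (frob_le U) (frob_le V) (Real.sqrt_nonneg _)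
            (mul_nonneg (Real.sqrt_nonneg _) (rowMaxNorm_nonneg U))
      _ = _ := by rw [hD]; ring
  obtain ⟨k, U, V, hk, hN, -⟩ := aux_exists N (max 0 (linfNorm N)) N.rank (le_max_left _ _) le_rfl
    (le_max_right _ _)
  refine le_trans ?_ (mul_le_mul_of_nonneg_right hR hD0)
  rcases hD0.eq_or_lt with h | h
  · have := hall _ ⟨k, U, V, hk, hN, rfl⟩
    rw [← h] at this ⊢; simpa using this
  · rw [← div_le_iff₀ h]
    refine le_csInf ⟨rowMaxNorm U * rowMaxNorm V, k, U, V, hk, hN, rfl⟩ ?_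
    intro c hc
    rw [div_le_iff₀ h]
    exact hall c hc

/-- if `rank M ≤ r` and `‖M‖_∞ ≤ α`, then `‖M‖_max ≤ α √r` and
`‖M‖_* ≤ α √r · √(d1 d2)`; that is, `M ∈ K_max(α, α√r)` and
`K_max(α, α√r) ⊆ K_*(α, r)`. -/
theorem lowRank_mem_Kmax_and_Kmax_subset_Kstar {d1 d2 : ℕ}
    (M : Matrix (Fin d1) (Fin d2) ℝ) (α : ℝ) (r : ℕ) (hα : 0 < α) (hr : 0 < r)
    (hrank : M.rank ≤ r) (hinf : linfNorm M ≤ α) :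
    (maxNorm M ≤ α * Real.sqrt r ∧ traceNorm M ≤ α * Real.sqrt r * Real.sqrt (d1 * d2)) ∧
      { N : Matrix (Fin d1) (Fin d2) ℝ | linfNorm N ≤ α ∧ maxNorm N ≤ α * Real.sqrt r } ⊆
        { N : Matrix (Fin d1) (Fin d2) ℝ |
          linfNorm N ≤ α ∧ traceNorm N / Real.sqrt (d1 * d2) ≤ α * Real.sqrt r } := by
  have h1 : maxNorm M ≤ α * Real.sqrt r := by
    obtain ⟨k, U, V, hk, hM, hle⟩ := aux_exists M α r hα.le hrank hinf
    refine le_trans (csInf_le ⟨0, ?_⟩ ⟨k, U, V, hk, hM, rfl⟩) hle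
    rintro c ⟨k, U, V, -, -, rfl⟩
    exact mul_nonneg (rowMaxNorm_nonneg _) (rowMaxNorm_nonneg _)
  refine ⟨⟨h1, traceNorm_le M _ h1⟩, ?_⟩
  rintro N ⟨hN1, hN2⟩
  exact ⟨hN1, div_le_of_le_mul₀ (Real.sqrt_nonneg _) (by positivity) (traceNorm_le N _ hN2)⟩
end

section
/- Let α, R > 0 and let F : ℝ → (0,1) be differentiable with F and F' nonzero on [−α, α], and with L_α = sup_{|x|≤α} |F'(x)|/(F(x)(1−F(x))) and U_α = sup_{|x|≤α} log(1/(F(x)(1−F(x)))) finite. Define the loss g(x; y) = 1{y=1} log(1/F(x)) + 1{y=−1} log(1/(1−F(x))) for x ∈ [−α, α] and y ∈ {−1, +1}. Fix a sign matrix Y ∈ {−1, +1}^{d1×d2}, let Π = (π_{kl}) be a probability distribution on [d1]×[d2], and let S = ((i₁,j₁), …, (iₙ,jₙ)) be drawn i.i.d. from Π with 2 < n ≤ d1 d2. Then for any δ > 0, with probability at least 1 − δ over the draw of S, sup_{M ∈ K_max(α,R)} [ Σ_{k,l} π_{kl} g(M_{k,l}; Y_{k,l}) − (1/n) Σ_{t=1}^n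 g(M_{i_t,j_t}; Y_{i_t,j_t}) ] ≤ 17 L_α R √(d/n) + U_α √( 8 log(2/δ) / n ), where d = d1 + d2. -/
open scoped BigOperators
open Matrix

/-- The 1-bit loss `g(x; y) = 1{y=1} log(1/F(x)) + 1{y=−1} log(1/(1−F(x)))`. -/
noncomputable def oneBitLoss (F : ℝ → ℝ) (x y : ℝ) : ℝ :=
  (if y = 1 then Real.log (1 / F x) else 0) +
    (if y = -1 then Real.log (1 / (1 - F x)) else 0)


/-- Expectation over `n` i.i.d. draws with weights `p`. -/
noncomputable def EX {Ω : Type} [Fintype Ω] (p : Ω → ℝ) (n : ℕ) (f : (Fin n → Ω) → ℝ) : ℝ :=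
  ∑ S : Fin n → Ω, (∏ t, p (S t)) * f S

section EXlemmas
variable {Ω : Type} [Fintype Ω] {p : Ω → ℝ}

lemma EX_zero (f : (Fin 0 → Ω) → ℝ) : EX p 0 f = f Fin.elim0 := by
  unfold EX
  rw [Fintype.sum_eq_single (Fin.elim0 : Fin 0 → Ω)]
  · simp
  · intro x hx; exact absurd (Subsingleton.elim _ _) hx

lemma EX_succ (n : ℕ) (f : (Fin (n+1) → Ω) → ℝ) :
    EX p (n+1) f = ∑ x, p x * EX p n (fun S => f (Fin.cons x S)) := by
  unfold EX
  rw [← (Fin.consEquiv (fun _ : Fin (n+1) => Ω)).sum_comp, Fintype.sum_prod_type]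
  refine Finset.sum_congr rfl fun x _ => ?_
  rw [Finset.mul_sum]
  refine Finset.sum_congr rfl fun S _ => ?_
  simp [Fin.consEquiv, Fin.prod_univ_succ, mul_assoc]

lemma EX_mono (hp : ∀ x, 0 ≤ p x) {n : ℕ} {f g : (Fin n → Ω) → ℝ} (h : ∀ S, f S ≤ g S) :
    EX p n f ≤ EX p n g :=
  Finset.sum_le_sum fun S _ =>
    mul_le_mul_of_nonneg_left (h S) (Finset.prod_nonneg fun _ _ => hp _)

lemma EX_add {n : ℕ} (f g : (Fin n → Ω) → ℝ) :
    EX p n (fun S => f S + g S) = EX p n f + EX p n g := by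
  simp [EX, mul_add, Finset.sum_add_distrib]

lemma EX_smul {n : ℕ} (c : ℝ) (f : (Fin n → Ω) → ℝ) :
    EX p n (fun S => c * f S) = c * EX p n f := by
  simp only [EX, Finset.mul_sum]
  exact Finset.sum_congr rfl fun S _ => by ring

lemma EX_sum {κ : Type} (s : Finset κ) {n : ℕ} (f : κ → (Fin n → Ω) → ℝ) :
    EX p n (fun S => ∑ k ∈ s, f k S) = ∑ k ∈ s, EX p n (f k) := by
  simp only [EX, Finset.mul_sum]
  exact Finset.sum_comm

lemma EX_const (hp1 : ∑ x, p x = 1) (n : ℕ) (c : ℝ) : EX p n (fun _ => c) = c := by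
  induction n with
  | zero => rw [EX_zero]
  | succ n ih => rw [EX_succ]; simp only [ih]; rw [← Finset.sum_mul, hp1, one_mul]

/-- Hoeffding-type bound for a single variable. -/
lemma hoeff (hp : ∀ x, 0 ≤ p x) (hp1 : ∑ x, p x = 1) (h : Ω → ℝ) (c : ℝ) (hc : 0 < c)
    (hh : ∀ x y, h x ≤ h y + c) (lam : ℝ) (hl : 0 ≤ lam) :
    ∑ x, p x * Real.exp (lam * h x) ≤
      Real.exp (lam * ∑ x, p x * h x) * Real.exp (lam ^ 2 * c ^ 2 / 2) := by
  set m := ∑ x, p x * h x with hm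
  have hb : ∀ x, |h x - m| ≤ c := by
    intro x
    have e1 : h x - m = ∑ y, p y * (h x - h y) := by
      simp only [mul_sub, Finset.sum_sub_distrib, ← Finset.sum_mul, hp1, hm, one_mul]
    rw [abs_le, e1]
    have e2 : c = ∑ y, p y * c := by rw [← Finset.sum_mul, hp1, one_mul]
    constructor
    · rw [e2, ← Finset.sum_neg_distrib]
      refine Finset.sum_le_sum fun y _ => ?_
      rw [← mul_neg]
      exact mul_le_mul_of_nonneg_left (by linarith [hh y x]) (hp y)
    · rw [e2]
      exact Finset.sum_le_sum fun y _ => mul_le_mul_of_nonneg_left (by linarith [hh x y]) (hp y)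
  have key : ∀ z, |z| ≤ c → Real.exp (lam * z) ≤
      Real.cosh (lam * c) + z / c * Real.sinh (lam * c) := by
    intro z hz
    rw [abs_le] at hz
    have hcx := convexOn_exp.2
    have := @hcx (lam * c) (Set.mem_univ _) (-(lam * c)) (Set.mem_univ _)
      ((1 + z / c) / 2) ((1 - z / c) / 2)
      (by have : -1 ≤ z / c := by rw [le_div_iff₀ hc]; linarith
          linarith)
      (by have : z / c ≤ 1 := by rw [div_le_iff₀ hc]; linarith
          linarith) (by ring)
    simp only [smul_eq_mul] at this
    rw [Real.cosh_eq, Real.sinh_eq]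
    have e : (1 + z / c) / 2 * (lam * c) + (1 - z / c) / 2 * (-(lam * c)) = lam * z := by
      field_simp; try ring
    rw [e] at this
    linarith
  have h1 : ∑ x, p x * Real.exp (lam * (h x - m)) ≤ Real.cosh (lam * c) := by
    calc _ ≤ ∑ x, p x * (Real.cosh (lam * c) + (h x - m) / c * Real.sinh (lam * c)) :=
          Finset.sum_le_sum fun x _ => mul_le_mul_of_nonneg_left (key _ (hb x)) (hp x)
      _ = (∑ x, p x) * Real.cosh (lam * c) +
          ((∑ x, p x * h x) - (∑ x, p x) * m) / c * Real.sinh (lam * c) := by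
          simp only [Finset.sum_mul, ← Finset.sum_sub_distrib, Finset.sum_div,
            ← Finset.sum_add_distrib]
          exact Finset.sum_congr rfl fun x _ => by ring
      _ = Real.cosh (lam * c) := by rw [hp1, ← hm]; ring
  have h2 : Real.cosh (lam * c) ≤ Real.exp (lam ^ 2 * c ^ 2 / 2) := by
    have := Real.cosh_le_exp_half_sq (lam * c)
    rwa [mul_pow] at this
  calc _ = Real.exp (lam * m) * ∑ x, p x * Real.exp (lam * (h x - m)) := by
        rw [Finset.mul_sum]
        refine Finset.sum_congr rfl fun x _ => ?_
        rw [show lam * h x = lam * m + lam * (h x - m) by ring, Real.exp_add]; ring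
    _ ≤ _ := mul_le_mul_of_nonneg_left (h1.trans h2) (Real.exp_pos _).le

/-- McDiarmid-type exponential moment bound. -/
lemma mcd (hp : ∀ x, 0 ≤ p x) (hp1 : ∑ x, p x = 1) (c : ℝ) (hc : 0 < c)
    (lam : ℝ) (hl : 0 ≤ lam) (n : ℕ) : ∀ f : (Fin n → Ω) → ℝ,
    (∀ t S S', (∀ s, s ≠ t → S s = S' s) → f S ≤ f S' + c) →
    EX p n (fun S => Real.exp (lam * f S)) ≤
      Real.exp (lam * EX p n f) * Real.exp (n * (lam ^ 2 * c ^ 2 / 2)) := by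
  induction n with
  | zero => intro f _; simp [EX_zero]
  | succ n ih =>
    intro f hf
    rw [EX_succ, EX_succ]
    set h : Ω → ℝ := fun x => EX p n (fun S => f (Fin.cons x S)) with hh
    have h1 : ∀ x, EX p n (fun S => Real.exp (lam * f (Fin.cons x S))) ≤
        Real.exp (lam * h x) * Real.exp (n * (lam ^ 2 * c ^ 2 / 2)) := by
      intro x
      refine ih (fun S => f (Fin.cons x S)) fun t S S' hS => hf t.succ _ _ ?_
      intro s
      refine Fin.cases ?_ ?_ s
      · intro _; simp
      · intro i hi; simp only [Fin.cons_succ]; exact hS i (fun e => hi (by rw [e]))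
    have h2 : ∀ x y, h x ≤ h y + c := by
      intro x y
      rw [hh]
      have : EX p n (fun S => f (Fin.cons y S)) + c = EX p n (fun S => f (Fin.cons y S) + c) := by
        rw [EX_add, EX_const hp1]
      simp only [this]
      refine EX_mono hp fun S => hf 0 _ _ ?_
      intro s
      refine Fin.cases ?_ ?_ s
      · intro h; exact absurd rfl h
      · intro i _; simp
    calc _ ≤ ∑ x, p x * (Real.exp (lam * h x) * Real.exp (n * (lam ^ 2 * c ^ 2 / 2))) :=
          Finset.sum_le_sum fun x _ => mul_le_mul_of_nonneg_left (h1 x) (hp x)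
      _ = (∑ x, p x * Real.exp (lam * h x)) * Real.exp (n * (lam ^ 2 * c ^ 2 / 2)) := by
          rw [Finset.sum_mul]; exact Finset.sum_congr rfl fun x _ => by ring
      _ ≤ _ := mul_le_mul_of_nonneg_right (hoeff hp hp1 h c hc h2 lam hl) (Real.exp_pos _).le
      _ = _ := by
          rw [mul_assoc, ← Real.exp_add]; congr 2; push_cast; ring

/-- Tail bound. -/
lemma mcd_tail (hp : ∀ x, 0 ≤ p x) (hp1 : ∑ x, p x = 1) (c : ℝ) (hc : 0 < c)
    (n : ℕ) (hn : 0 < n) (f : (Fin n → Ω) → ℝ)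
    (hf : ∀ t S S', (∀ s, s ≠ t → S s = S' s) → f S ≤ f S' + c) (e : ℝ) (he : 0 ≤ e) :
    1 - Real.exp (-(e ^ 2 / (2 * n * c ^ 2))) ≤
      EX p n (Set.indicator {S | f S ≤ EX p n f + e} (fun _ => 1)) := by
  set lam := e / (n * c ^ 2) with hlam
  have hn' : (0:ℝ) < n := by exact_mod_cast hn
  have hl : 0 ≤ lam := by positivity
  have h1 := mcd hp hp1 c hc lam hl n f hf
  set m := EX p n f
  have h2 : EX p n (fun S => 1 - Real.exp (-(lam * (m + e))) * Real.exp (lam * f S)) ≤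
      EX p n (Set.indicator {S | f S ≤ m + e} (fun _ => 1)) := by
    refine EX_mono hp fun S => ?_
    by_cases hS : f S ≤ m + e
    · rw [Set.indicator_of_mem (by exact hS)]
      have : 0 < Real.exp (-(lam * (m + e))) * Real.exp (lam * f S) := by positivity
      linarith
    · rw [Set.indicator_of_notMem (by exact hS), ← Real.exp_add]
      push Not at hS
      have : 1 ≤ Real.exp (-(lam * (m + e)) + lam * f S) := by
        apply Real.one_le_exp
        nlinarith
      linarith
  refine le_trans ?_ h2
  simp only [sub_eq_add_neg, ← neg_mul]
  rw [EX_add, EX_const hp1, EX_smul]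
  have h3 : Real.exp (-(lam * (m + e))) * EX p n (fun S => Real.exp (lam * f S)) ≤
      Real.exp (-(e ^ 2 / (2 * n * c ^ 2))) := by
    refine (mul_le_mul_of_nonneg_left h1 (Real.exp_pos _).le).trans ?_
    rw [← Real.exp_add, ← Real.exp_add]
    apply Real.exp_le_exp.2
    apply le_of_eq
    rw [hlam]; field_simp; ring
  simp only [neg_mul] at h3 ⊢
  linarith
end EXlemmas

/-! Symmetrization and contraction. -/

/-- Rademacher sign. -/
noncomputable def sg (b : Bool) : ℝ := if b then 1 else -1

/-- Boundedness of a family. -/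
def Bd {ι : Type} (a : ι → ℝ) : Prop := ∃ C, ∀ i, |a i| ≤ C

lemma Bd.add {ι : Type} {a b : ι → ℝ} (ha : Bd a) (hb : Bd b) : Bd (fun i => a i + b i) := by
  obtain ⟨C, hC⟩ := ha
  obtain ⟨D, hD⟩ := hb
  exact ⟨C + D, fun i => (abs_add_le _ _).trans (add_le_add (hC i) (hD i))⟩

lemma Bd.smul {ι : Type} {a : ι → ℝ} (c : ℝ) (ha : Bd a) : Bd (fun i => c * a i) := by
  obtain ⟨C, hC⟩ := ha
  exact ⟨|c| * C, fun i => by rw [abs_mul]; exact mul_le_mul_of_nonneg_left (hC i) (abs_nonneg _)⟩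

lemma Bd.sub {ι : Type} {a b : ι → ℝ} (ha : Bd a) (hb : Bd b) : Bd (fun i => a i - b i) := by
  have := ha.add (hb.smul (-1))
  simpa [sub_eq_add_neg] using this

lemma Bd.zero {ι : Type} : Bd (fun _ : ι => (0:ℝ)) := ⟨0, by simp⟩

lemma Bd.sum {ι κ : Type} (s : Finset κ) {a : κ → ι → ℝ} (h : ∀ k, Bd (a k)) :
    Bd (fun i => ∑ k ∈ s, a k i) := by
  classical
  induction s using Finset.induction_on with
  | empty => simpa using Bd.zero
  | insert k s hk ih => simp only [Finset.sum_insert hk]; exact (h k).add ih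

lemma Bd.le {ι : Type} {a : ι → ℝ} (h : Bd a) (i : ι) : a i ≤ ⨆ i, a i := by
  obtain ⟨C, hC⟩ := h
  exact le_ciSup (f := a) ⟨C, by rintro _ ⟨j, rfl⟩; exact (abs_le.1 (hC j)).2⟩ i

section sym
variable {Ω : Type} [Fintype Ω] {p : Ω → ℝ} {ι : Type} [Nonempty ι]

lemma contr (a g m : ι → ℝ) (ha : Bd a) (hm : Bd m) (L : ℝ)
    (hL : ∀ i j, |g i - g j| ≤ L * |m i - m j|) :
    (⨆ i, (a i + 2 * g i)) + (⨆ i, (a i - 2 * g i)) ≤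
      (⨆ i, (a i + 2 * L * m i)) + (⨆ i, (a i - 2 * L * m i)) := by
  have hA : Bd (fun i => a i + 2 * L * m i) := ha.add (hm.smul _)
  have hB : Bd (fun i => a i - 2 * L * m i) := ha.sub (hm.smul _)
  rw [← le_sub_iff_add_le]
  refine ciSup_le fun i => ?_
  rw [le_sub_comm]
  refine ciSup_le fun j => ?_
  have h1 := hA.le i
  have h2 := hB.le i
  have h3 := hA.le j
  have h4 := hB.le j
  have h5 := (le_abs_self _).trans (hL i j)
  rcases abs_cases (m i - m j) with ⟨h, _⟩ | ⟨h, _⟩ <;> rw [h] at h5 <;> nlinarith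

lemma symstep (hp : ∀ x, 0 ≤ p x) (hp1 : ∑ x, p x = 1) (a : ι → ℝ) (g m : ι → Ω → ℝ)
    (ha : Bd a) (hg : ∀ x, Bd (fun i => g i x)) (hm : ∀ x, Bd (fun i => m i x)) (L : ℝ)
    (hL : ∀ i j x, |g i x - g j x| ≤ L * |m i x - m j x|) :
    ∑ x, p x * ⨆ i, (a i + ((∑ y, p y * g i y) - g i x)) ≤
      ∑ x, p x * ∑ b : Bool, (1/2) * ⨆ i, (a i + 2 * L * (sg b * m i x)) := by
  have h1 : ∀ x, (⨆ i, (a i + ((∑ y, p y * g i y) - g i x))) ≤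
      (∑ y, p y * ⨆ i, (a i + 2 * g i y)) / 2 + (⨆ i, (a i - 2 * g i x)) / 2 := by
    intro x
    refine ciSup_le fun i => ?_
    have hB := Bd.le (ha.sub ((hg x).smul 2)) i
    have hA : ∑ y, p y * (a i + 2 * g i y) ≤ ∑ y, p y * ⨆ i, (a i + 2 * g i y) :=
      Finset.sum_le_sum fun y _ =>
        mul_le_mul_of_nonneg_left (Bd.le (ha.add ((hg y).smul 2)) i) (hp y)
    have e : ∑ y, p y * (a i + 2 * g i y) = a i + 2 * ∑ y, p y * g i y := by
      simp only [mul_add, Finset.sum_add_distrib, ← Finset.sum_mul, hp1, Finset.mul_sum]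
      congr 1
      · ring
      · exact Finset.sum_congr rfl fun y _ => by ring
    linarith
  calc _ ≤ ∑ x, p x * ((∑ y, p y * ⨆ i, (a i + 2 * g i y)) / 2 + (⨆ i, (a i - 2 * g i x)) / 2) :=
        Finset.sum_le_sum fun x _ => mul_le_mul_of_nonneg_left (h1 x) (hp x)
    _ = ∑ x, p x * (((⨆ i, (a i + 2 * g i x)) + (⨆ i, (a i - 2 * g i x))) / 2) := by
        simp only [mul_add, Finset.sum_add_distrib, ← Finset.sum_mul, hp1, add_div, one_mul,
          Finset.sum_div]
        congr 1
        exact Finset.sum_congr rfl fun y _ => by ring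
    _ ≤ _ := by
        refine Finset.sum_le_sum fun x _ => mul_le_mul_of_nonneg_left ?_ (hp x)
        have := contr a (fun i => g i x) (fun i => m i x) ha (hm x) L (fun i j => hL i j x)
        simp only [Fintype.sum_bool, sg, if_true, Bool.false_eq_true, if_false, one_mul, neg_mul,
          mul_neg, ← sub_eq_add_neg]
        linarith

lemma sym (hp : ∀ x, 0 ≤ p x) (hp1 : ∑ x, p x = 1) (g m : ι → Ω → ℝ)
    (hg : ∀ x, Bd (fun i => g i x)) (hm : ∀ x, Bd (fun i => m i x)) (L : ℝ)
    (hL : ∀ i j x, |g i x - g j x| ≤ L * |m i x - m j x|) (n : ℕ) :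
    ∀ a : ι → ℝ, Bd a →
    EX p n (fun S => ⨆ i, (a i + ∑ t, ((∑ y, p y * g i y) - g i (S t)))) ≤
    EX p n (fun S => EX (fun _ : Bool => (1/2 : ℝ)) n
      (fun b => ⨆ i, (a i + 2 * L * ∑ t, sg (b t) * m i (S t)))) := by
  induction n with
  | zero => intro a _; simp [EX_zero]
  | succ n ih =>
    intro a ha
    have hG : ∀ x, Bd (fun i => (∑ y, p y * g i y) - g i x) := fun x =>
      (Bd.sum _ (fun y => (hg y).smul _)).sub (hg x)
    calc _ = EX p n (fun S => ∑ x, p x * ⨆ i, ((a i + ∑ t, ((∑ y, p y * g i y) - g i (S t)))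
            + ((∑ y, p y * g i y) - g i x))) := by
          rw [EX_succ, EX_sum]
          refine Finset.sum_congr rfl fun x _ => ?_
          rw [← EX_smul]
          congr 1; funext S; congr 2; funext i
          rw [Fin.sum_univ_succ]
          simp only [Fin.cons_zero, Fin.cons_succ]
          ring
      _ ≤ EX p n (fun S => ∑ x, p x * ∑ b : Bool, (1/2) *
            ⨆ i, ((a i + ∑ t, ((∑ y, p y * g i y) - g i (S t))) + 2 * L * (sg b * m i x))) := by
          refine EX_mono hp fun S => ?_
          exact symstep hp hp1 _ g m (ha.add (Bd.sum _ fun t => hG (S t))) hg hm L hL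
      _ = ∑ x, p x * ∑ b : Bool, (1/2) * EX p n (fun S => ⨆ i, ((a i + 2 * L * (sg b * m i x)) +
            ∑ t, ((∑ y, p y * g i y) - g i (S t)))) := by
          rw [EX_sum]
          refine Finset.sum_congr rfl fun x _ => ?_
          rw [EX_smul, EX_sum]
          congr 1
          refine Finset.sum_congr rfl fun b _ => ?_
          rw [EX_smul]
          congr 2; funext S; congr 1; funext i; ring
      _ ≤ ∑ x, p x * ∑ b : Bool, (1/2) * EX p n (fun S => EX (fun _ : Bool => (1/2 : ℝ)) n
      (fun c => ⨆ i, ((a i + 2 * L * (sg b * m i x)) + 2 * L * ∑ t, sg (c t) * m i (S t)))) := by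
          refine Finset.sum_le_sum fun x _ => mul_le_mul_of_nonneg_left ?_ (hp x)
          refine Finset.sum_le_sum fun b _ => mul_le_mul_of_nonneg_left ?_ (by norm_num)
          exact ih _ (ha.add (((hm x).smul _).smul _))
      _ = _ := by
          rw [EX_succ]
          refine Finset.sum_congr rfl fun x _ => ?_
          congr 1
          simp only [← EX_smul]
          rw [← EX_sum]
          congr 1; funext S
          rw [EX_succ]
          refine Finset.sum_congr rfl fun b _ => ?_
          rw [EX_smul]
          congr 2; funext c; congr 1; funext i
          rw [Fin.sum_univ_succ]
          simp only [Fin.cons_zero, Fin.cons_succ]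
          ring
end sym

/-! Rademacher averages of finite classes. -/

lemma half_nonneg : ∀ _ : Bool, (0:ℝ) ≤ 1/2 := fun _ => by norm_num

lemma half_sum : ∑ _b : Bool, (1/2 : ℝ) = 1 := by simp

lemma rad_mgf (lam : ℝ) (n : ℕ) : ∀ z : Fin n → ℝ, (∀ t, |z t| ≤ 1) →
    EX (fun _ : Bool => (1/2 : ℝ)) n (fun b => Real.exp (lam * ∑ t, sg (b t) * z t)) ≤
      Real.exp (n * (lam ^ 2 / 2)) := by
  induction n with
  | zero => intro z _; simp [EX_zero]
  | succ n ih =>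
    intro z hz
    rw [EX_succ]
    have e : ∀ c : Bool, EX (fun _ : Bool => (1/2 : ℝ)) n (fun b => Real.exp (lam * ∑ t,
        sg ((Fin.cons c b : Fin (n+1) → Bool) t) * z t)) = Real.exp (lam * (sg c * z 0)) *
        EX (fun _ : Bool => (1/2 : ℝ)) n (fun b => Real.exp (lam * ∑ t, sg (b t) * z t.succ)) := by
      intro c
      rw [← EX_smul]
      congr 1; funext b
      rw [← Real.exp_add, Fin.sum_univ_succ]
      simp only [Fin.cons_zero, Fin.cons_succ]
      congr 1; ring
    simp only [e]
    simp only [← mul_assoc (1/2 : ℝ)]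
    rw [← Finset.sum_mul]
    have h0 : ∑ c : Bool, (1/2 : ℝ) * Real.exp (lam * (sg c * z 0)) ≤ Real.exp (lam ^ 2 / 2) := by
      have : ∑ c : Bool, (1/2 : ℝ) * Real.exp (lam * (sg c * z 0)) = Real.cosh (lam * z 0) := by
        rw [Real.cosh_eq]; simp [sg]; ring
      rw [this]
      refine (Real.cosh_le_exp_half_sq _).trans (Real.exp_le_exp.2 ?_)
      have : (z 0) ^ 2 ≤ 1 := by rw [sq_le_one_iff_abs_le_one]; exact hz 0
      nlinarith [mul_le_mul_of_nonneg_left this (sq_nonneg lam)]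
    have h1 := ih (fun t => z t.succ) (fun t => hz _)
    calc _ ≤ Real.exp (lam ^ 2 / 2) * Real.exp (n * (lam ^ 2 / 2)) := by
          refine mul_le_mul h0 h1 ?_ (Real.exp_pos _).le
          have := EX_mono half_nonneg (n := n) (f := fun _ => 0) (g := fun b =>
            Real.exp (lam * ∑ t, sg (b t) * z t.succ)) (fun _ => (Real.exp_pos _).le)
          rwa [EX_const half_sum] at this
      _ = _ := by rw [← Real.exp_add]; congr 1; push_cast; ring

lemma rad_max {J : Type} [Fintype J] [Nonempty J] (n : ℕ) (z : J → Fin n → ℝ)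
    (hz : ∀ j t, |z j t| ≤ 1) (lam : ℝ) (hl : 0 ≤ lam) :
    lam * EX (fun _ : Bool => (1/2 : ℝ)) n (fun b => ⨆ j, ∑ t, sg (b t) * z j t) ≤
      Real.log (Fintype.card J) + n * (lam ^ 2 / 2) := by
  set c := Real.log (Fintype.card J) + n * (lam ^ 2 / 2) with hc
  have hcard : (0:ℝ) < Fintype.card J := by exact_mod_cast Fintype.card_pos
  have hec : Real.exp c = Fintype.card J * Real.exp (n * (lam ^ 2 / 2)) := by
    rw [hc, Real.exp_add, Real.exp_log hcard]
  have hpt : ∀ b : Fin n → Bool, lam * (⨆ j, ∑ t, sg (b t) * z j t) ≤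
      (c - 1) + Real.exp (-c) * ∑ j, Real.exp (lam * ∑ t, sg (b t) * z j t) := by
    intro b
    obtain ⟨j, hj⟩ := exists_eq_ciSup_of_finite (f := fun j => ∑ t, sg (b t) * z j t)
    rw [← hj]
    have h1 : Real.exp (lam * ∑ t, sg (b t) * z j t) ≤
        ∑ j, Real.exp (lam * ∑ t, sg (b t) * z j t) :=
      Finset.single_le_sum (f := fun j => Real.exp (lam * ∑ t, sg (b t) * z j t))
        (fun _ _ => (Real.exp_pos _).le) (Finset.mem_univ j)
    have h2 := Real.add_one_le_exp (-c + lam * ∑ t, sg (b t) * z j t)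
    rw [Real.exp_add] at h2
    have h3 := mul_le_mul_of_nonneg_left h1 (Real.exp_pos (-c)).le
    linarith
  rw [← EX_smul]
  refine (EX_mono half_nonneg hpt).trans ?_
  rw [EX_add, EX_const half_sum, EX_smul, EX_sum]
  have h4 : ∑ j, EX (fun _ : Bool => (1/2 : ℝ)) n
      (fun b => Real.exp (lam * ∑ t, sg (b t) * z j t)) ≤ Real.exp c := by
    rw [hec]
    calc _ ≤ ∑ _j : J, Real.exp (n * (lam ^ 2 / 2)) :=
          Finset.sum_le_sum fun j _ => rad_mgf lam n (z j) (hz j)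
      _ = _ := by simp
  have h5 := mul_le_mul_of_nonneg_left h4 (Real.exp_pos (-c)).le
  rw [← Real.exp_add] at h5
  simp at h5
  linarith

/-! Grothendieck's inequality, with constant `49/8`. -/

/-- Rademacher linear form. -/
noncomputable def RX {k : ℕ} (u : Fin k → ℝ) (b : Fin k → Bool) : ℝ := ∑ i, sg (b i) * u i

lemma RX_cons {k : ℕ} (u : Fin (k+1) → ℝ) (c : Bool) (b : Fin k → Bool) :
    RX u (Fin.cons c b) = sg c * u 0 + RX (fun i => u i.succ) b := by
  simp [RX, Fin.sum_univ_succ]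

lemma RX_mean {k : ℕ} (u : Fin k → ℝ) :
    EX (fun _ : Bool => (1/2 : ℝ)) k (RX u) = 0 := by
  induction k with
  | zero => simp [EX_zero, RX]
  | succ k ih =>
    rw [EX_succ]
    simp only [RX_cons, EX_add, EX_const half_sum]
    have := ih (fun i => u i.succ)
    simp only [Fintype.sum_bool, sg]
    have e : EX (fun _ : Bool => (1/2 : ℝ)) k (fun S => RX (fun i => u i.succ) S) = 0 := this
    rw [e]; simp

lemma RX_inner {k : ℕ} (u v : Fin k → ℝ) :
    EX (fun _ : Bool => (1/2 : ℝ)) k (fun b => RX u b * RX v b) = ∑ i, u i * v i := by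
  induction k with
  | zero => simp [EX_zero, RX]
  | succ k ih =>
    rw [EX_succ, Fin.sum_univ_succ, ← ih (fun i => u i.succ) (fun i => v i.succ)]
    simp only [RX_cons]
    have e : ∀ c : Bool, EX (fun _ : Bool => (1/2 : ℝ)) k (fun S =>
        (sg c * u 0 + RX (fun i => u i.succ) S) * (sg c * v 0 + RX (fun i => v i.succ) S)) =
        u 0 * v 0 + EX (fun _ : Bool => (1/2 : ℝ)) k (fun S =>
          RX (fun i => u i.succ) S * RX (fun i => v i.succ) S) := by
      intro c
      have hs : sg c * sg c = 1 := by cases c <;> simp [sg]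
      have : (fun S => (sg c * u 0 + RX (fun i => u i.succ) S) *
          (sg c * v 0 + RX (fun i => v i.succ) S)) = fun S =>
          ((u 0 * v 0 + sg c * u 0 * RX (fun i => v i.succ) S) +
          sg c * v 0 * RX (fun i => u i.succ) S) + RX (fun i => u i.succ) S *
            RX (fun i => v i.succ) S := by
        funext S; linear_combination (u 0 * v 0) * hs
      rw [this, EX_add, EX_add, EX_add, EX_const half_sum, EX_smul, EX_smul]
      have e1 : EX (fun _ : Bool => (1/2 : ℝ)) k (fun S => RX (fun i => u i.succ) S) = 0 :=
        RX_mean _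
      have e2 : EX (fun _ : Bool => (1/2 : ℝ)) k (fun S => RX (fun i => v i.succ) S) = 0 :=
        RX_mean _
      rw [e1, e2]; ring
    simp only [e]
    rw [← Finset.sum_mul, half_sum, one_mul]

lemma RX_four {k : ℕ} (u : Fin k → ℝ) :
    EX (fun _ : Bool => (1/2 : ℝ)) k (fun b => RX u b ^ 4) ≤ 3 * (∑ i, u i ^ 2) ^ 2 := by
  induction k with
  | zero => simp [EX_zero, RX]
  | succ k ih =>
    have h0 := ih (fun i => u i.succ)
    have h2 := RX_inner (fun i => u i.succ) (fun i => u i.succ)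
    rw [EX_succ, Fin.sum_univ_succ]
    simp only [RX_cons, Fintype.sum_bool]
    rw [← mul_add, ← EX_add]
    have : (fun S => (sg true * u 0 + RX (fun i => u i.succ) S) ^ 4 +
        (sg false * u 0 + RX (fun i => u i.succ) S) ^ 4) = fun S =>
        2 * u 0 ^ 4 + (12 * u 0 ^ 2 * (RX (fun i => u i.succ) S * RX (fun i => u i.succ) S) +
        2 * RX (fun i => u i.succ) S ^ 4) := by
      funext S; simp [sg]; ring
    rw [this, EX_add, EX_add, EX_const half_sum, EX_smul, EX_smul, h2]
    simp only [← pow_two]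
    set q := ∑ i : Fin k, u i.succ ^ 2
    nlinarith [sq_nonneg (u 0 ^ 2)]

/-- Truncation at level `7/4`. -/
noncomputable def clp (x : ℝ) : ℝ := max (-(7/4)) (min x (7/4))

lemma clp_abs (x : ℝ) : |clp x| ≤ 7/4 := by
  rw [abs_le]; unfold clp
  exact ⟨le_max_left _ _, max_le (by norm_num) (min_le_right _ _)⟩

lemma clp_sq (x : ℝ) : clp x ^ 2 ≤ x ^ 2 := by
  unfold clp
  rcases le_total x (7/4) with h | h
  · rw [min_eq_left h]
    rcases le_total (-(7/4)) x with h' | h'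
    · rw [max_eq_right h']
    · rw [max_eq_left h']; nlinarith
  · rw [min_eq_right h, max_eq_right (by norm_num)]; nlinarith

lemma clp_sub (x : ℝ) : (x - clp x) ^ 2 ≤ x ^ 4 / 49 := by
  have key : ∀ y : ℝ, 7/4 ≤ y → (y - 7/4) ^ 2 ≤ y ^ 4 / 49 := by
    intro y hy
    have h1 : y - 7/4 ≤ y ^ 2 / 7 := by nlinarith [sq_nonneg (y - 7/2)]
    calc (y - 7/4) ^ 2 ≤ (y ^ 2 / 7) ^ 2 := pow_le_pow_left₀ (by linarith) h1 2
      _ = _ := by ring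
  unfold clp
  rcases le_total x (7/4) with h | h
  · rw [min_eq_left h]
    rcases le_total (-(7/4)) x with h' | h'
    · rw [max_eq_right h', sub_self, zero_pow two_ne_zero]; positivity
    · rw [max_eq_left h']
      have := key (-x) (by linarith)
      calc _ = (-x - 7/4) ^ 2 := by ring
        _ ≤ _ := this
        _ = _ := by ring
  · rw [min_eq_right h, max_eq_right (by norm_num)]; exact key x h

section groth
variable {T A B : Type} [Fintype T]

/-- From sign vectors to the cube. -/
lemma cube_lin {A : Type} [Fintype A] (c : T → ℝ) (i : T → A) (D : ℝ)
    (h : ∀ s : A → Bool, ∑ t, c t * sg (s (i t)) ≤ D) (a : A → ℝ) (ha : ∀ k, |a k| ≤ 1) :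
    ∑ t, c t * a (i t) ≤ D := by
  have hcv : Convex ℝ {a : A → ℝ | ∑ t, c t * a (i t) ≤ D} := by
    intro x hx y hy r q hr hq hrq
    simp only [Set.mem_ofPred_eq] at hx hy ⊢
    have : ∑ t, c t * (r • x + q • y) (i t) = r * ∑ t, c t * x (i t) + q * ∑ t, c t * y (i t) := by
      rw [Finset.mul_sum, Finset.mul_sum, ← Finset.sum_add_distrib]
      exact Finset.sum_congr rfl fun t _ => by simp; ring
    rw [this]
    have e1 := mul_le_mul_of_nonneg_left hx hr
    have e2 := mul_le_mul_of_nonneg_left hy hq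
    have e3 : r * D + q * D = D := by rw [← add_mul, hrq, one_mul]
    linarith
  have hsub : Set.univ.pi (fun _ : A => ({-1, 1} : Set ℝ)) ⊆
      {a : A → ℝ | ∑ t, c t * a (i t) ≤ D} := by
    intro x hx
    have hx' : x = fun k => sg (decide (x k = 1)) := by
      funext k
      have := hx k (Set.mem_univ _)
      rcases this with h | h
      · rw [h]; norm_num [sg]
      · have h : x k = 1 := h
        rw [h]; simp [sg]
    rw [hx', Set.mem_ofPred_eq]
    exact h (fun k => decide (x k = 1))
  have := convexHull_min hsub hcv
  refine this ?_
  rw [convexHull_pi]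
  intro k _
  rw [convexHull_pair, segment_eq_Icc (by norm_num)]
  exact abs_le.1 (ha k)

lemma cube_bilin [Fintype A] [Fintype B] (c : T → ℝ) (i : T → A) (j : T → B) (D : ℝ)
    (h : ∀ (s : A → Bool) (r : B → Bool), ∑ t, c t * (sg (s (i t)) * sg (r (j t))) ≤ D)
    (a : A → ℝ) (b : B → ℝ) (ha : ∀ k, |a k| ≤ 1) (hb : ∀ k, |b k| ≤ 1) :
    ∑ t, c t * (a (i t) * b (j t)) ≤ D := by
  have h1 : ∀ s : A → Bool, ∑ t, (c t * sg (s (i t))) * b (j t) ≤ D := fun s =>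
    cube_lin (fun t => c t * sg (s (i t))) j D (fun r => by simpa [mul_assoc] using h s r) b hb
  have := cube_lin (fun t => c t * b (j t)) i D (fun s => by
    refine le_trans (le_of_eq ?_) (h1 s)
    exact Finset.sum_congr rfl fun t _ => by ring) a ha
  refine le_trans (le_of_eq ?_) this
  exact Finset.sum_congr rfl fun t _ => by ring

/-- `G` bounds the bilinear form on unit vectors. -/
def GB (c : T → ℝ) (i : T → A) (j : T → B) (G : ℝ) : Prop :=
  ∀ (k : ℕ) (u : A → Fin k → ℝ) (v : B → Fin k → ℝ), (∀ a, ∑ l, u a l ^ 2 ≤ 1) →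
    (∀ b, ∑ l, v b l ^ 2 ≤ 1) → ∑ t, c t * ∑ l, u (i t) l * v (j t) l ≤ G

lemma GB.scale {c : T → ℝ} {i : T → A} {j : T → B} {G : ℝ} (hG : GB c i j G) {k : ℕ}
    (u : A → Fin k → ℝ) (v : B → Fin k → ℝ) (r q : ℝ) (hr : 0 ≤ r) (hq : 0 ≤ q)
    (hu : ∀ a, ∑ l, u a l ^ 2 ≤ r ^ 2)
    (hv : ∀ b, ∑ l, v b l ^ 2 ≤ q ^ 2) : ∑ t, c t * ∑ l, u (i t) l * v (j t) l ≤ r * q * G := by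
  have hz : ∀ (w : Fin k → ℝ), ∑ l, w l ^ 2 ≤ 0 ^ 2 → ∀ l, w l = 0 := by
    intro w hw l
    have h1 : w l ^ 2 ≤ ∑ l, w l ^ 2 :=
      Finset.single_le_sum (f := fun l => w l ^ 2) (fun _ _ => sq_nonneg _) (Finset.mem_univ l)
    have : w l ^ 2 = 0 := le_antisymm (by linarith) (sq_nonneg _)
    exact pow_eq_zero_iff (two_ne_zero) |>.1 this
  rcases hr.eq_or_lt with rfl | hr
  · have : ∀ a l, u a l = 0 := fun a => hz _ (hu a)
    simp [this]
  rcases hq.eq_or_lt with rfl | hq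
  · have : ∀ a l, v a l = 0 := fun a => hz _ (hv a)
    simp [this]
  have := hG k (fun a l => u a l / r) (fun b l => v b l / q)
    (fun a => by
      simp only [div_pow]; rw [← Finset.sum_div, div_le_one (by positivity)]; exact hu a)
    (fun a => by
      simp only [div_pow]; rw [← Finset.sum_div, div_le_one (by positivity)]; exact hv a)
  have e : ∑ t, c t * ∑ l, u (i t) l * v (j t) l =
      r * q * ∑ t, c t * ∑ l, u (i t) l / r * (v (j t) l / q) := by
    simp only [Finset.mul_sum]
    refine Finset.sum_congr rfl fun t _ => Finset.sum_congr rfl fun l _ => ?_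
    field_simp
  rw [e]
  exact mul_le_mul_of_nonneg_left this (by positivity)

/-- The same for functions on the discrete cube. -/
lemma GB.cube {c : T → ℝ} {i : T → A} {j : T → B} {G : ℝ} (hG : GB c i j G) {k : ℕ}
    (X : A → (Fin k → Bool) → ℝ) (Y : B → (Fin k → Bool) → ℝ) (r q : ℝ) (hr : 0 ≤ r) (hq : 0 ≤ q)
    (hu : ∀ a, EX (fun _ : Bool => (1/2 : ℝ)) k (fun w => X a w ^ 2) ≤ r ^ 2)
    (hv : ∀ b, EX (fun _ : Bool => (1/2 : ℝ)) k (fun w => Y b w ^ 2) ≤ q ^ 2) :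
    ∑ t, c t * EX (fun _ : Bool => (1/2 : ℝ)) k (fun w => X (i t) w * Y (j t) w) ≤
      r * q * G := by
  let e := Fintype.equivFin (Fin k → Bool)
  let s : ℝ := Real.sqrt (∏ _t : Fin k, (1/2 : ℝ))
  have hs : s * s = ∏ _t : Fin k, (1/2 : ℝ) := Real.mul_self_sqrt (by positivity)
  have hE : ∀ f g : (Fin k → Bool) → ℝ, EX (fun _ : Bool => (1/2 : ℝ)) k (fun w => f w * g w) =
      ∑ l, (s * f (e.symm l)) * (s * g (e.symm l)) := by
    intro f g
    rw [e.symm.sum_comp (fun w => (s * f w) * (s * g w))]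
    unfold EX
    refine Finset.sum_congr rfl fun w _ => ?_
    rw [← hs]; ring
  have h1 := hG.scale (fun a l => s * X a (e.symm l)) (fun b l => s * Y b (e.symm l)) r q hr hq
    (fun a => by have := hu a; simp only [pow_two] at this ⊢; rw [hE] at this; exact this)
    (fun a => by have := hv a; simp only [pow_two] at this ⊢; rw [hE] at this; exact this)
  simp only [hE]
  exact h1

lemma GB.step [Fintype A] [Fintype B] {c : T → ℝ} {i : T → A} {j : T → B} {G D : ℝ} (hG : GB c i j G)
    (h : ∀ (s : A → Bool) (r : B → Bool), ∑ t, c t * (sg (s (i t)) * sg (r (j t))) ≤ D) :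
    GB c i j (49/16 * D + G / 2) := by
  intro k u v hu hv
  have hX2 : ∀ w : Fin k → ℝ, ∑ l, w l ^ 2 ≤ 1 →
      EX (fun _ : Bool => (1/2 : ℝ)) k (fun b => RX w b ^ 2) ≤ 1 ^ 2 := by
    intro w hw
    have := RX_inner w w
    simp only [← pow_two] at this
    rw [this]; linarith
  have hC2 : ∀ w : Fin k → ℝ, ∑ l, w l ^ 2 ≤ 1 →
      EX (fun _ : Bool => (1/2 : ℝ)) k (fun b => clp (RX w b) ^ 2) ≤ 1 ^ 2 := fun w hw =>
    (EX_mono half_nonneg fun b => clp_sq _).trans (hX2 w hw)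
  have hD2 : ∀ w : Fin k → ℝ, ∑ l, w l ^ 2 ≤ 1 →
      EX (fun _ : Bool => (1/2 : ℝ)) k (fun b => (RX w b - clp (RX w b)) ^ 2) ≤ (1/4) ^ 2 := by
    intro w hw
    have h1 : EX (fun _ : Bool => (1/2 : ℝ)) k (fun b => (RX w b - clp (RX w b)) ^ 2) ≤
        EX (fun _ : Bool => (1/2 : ℝ)) k (fun b => 1/49 * RX w b ^ 4) :=
      EX_mono half_nonneg fun b => (clp_sub _).trans (by linarith)
    rw [EX_smul] at h1
    have h2 := RX_four w
    have h3 : (∑ l, w l ^ 2) ^ 2 ≤ 1 :=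
      pow_le_one₀ (Finset.sum_nonneg fun _ _ => sq_nonneg _) hw
    linarith
  have p1 := hG.cube (fun a b => clp (RX (u a) b)) (fun a b => RX (v a) b - clp (RX (v a) b))
    1 (1/4) (by norm_num) (by norm_num) (fun a => hC2 _ (hu a)) (fun a => hD2 _ (hv a))
  have p2 := hG.cube (fun a b => RX (u a) b - clp (RX (u a) b)) (fun a b => RX (v a) b)
    (1/4) 1 (by norm_num) (by norm_num) (fun a => hD2 _ (hu a)) (fun a => hX2 _ (hv a))
  have p3 : ∑ t, c t * EX (fun _ : Bool => (1/2 : ℝ)) k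
      (fun w => clp (RX (u (i t)) w) * clp (RX (v (j t)) w)) ≤ 49/16 * D := by
    simp only [← EX_smul]
    rw [← EX_sum]
    rw [← EX_const half_sum k (49/16 * D)]
    refine EX_mono half_nonneg fun w => ?_
    have := cube_bilin c i j D h (fun a => clp (RX (u a) w) * (4/7))
      (fun a => clp (RX (v a) w) * (4/7))
      (fun a => by rw [abs_mul, abs_of_pos (by norm_num : (0:ℝ) < 4/7)]
                   linarith [clp_abs (RX (u a) w)])
      (fun a => by rw [abs_mul, abs_of_pos (by norm_num : (0:ℝ) < 4/7)]
                   linarith [clp_abs (RX (v a) w)])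
    have e : ∑ t, c t * (clp (RX (u (i t)) w) * (4/7) * (clp (RX (v (j t)) w) * (4/7))) =
        16/49 * ∑ t, c t * (clp (RX (u (i t)) w) * clp (RX (v (j t)) w)) := by
      rw [Finset.mul_sum]; exact Finset.sum_congr rfl fun t _ => by ring
    rw [e] at this
    linarith
  have e : ∑ t, c t * ∑ l, u (i t) l * v (j t) l =
      ∑ t, c t * EX (fun _ : Bool => (1/2 : ℝ)) k
        (fun w => clp (RX (u (i t)) w) * clp (RX (v (j t)) w)) +
      (∑ t, c t * EX (fun _ : Bool => (1/2 : ℝ)) k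
        (fun w => clp (RX (u (i t)) w) * (RX (v (j t)) w - clp (RX (v (j t)) w))) +
      ∑ t, c t * EX (fun _ : Bool => (1/2 : ℝ)) k
        (fun w => (RX (u (i t)) w - clp (RX (u (i t)) w)) * RX (v (j t)) w)) := by
    rw [← Finset.sum_add_distrib, ← Finset.sum_add_distrib]
    refine Finset.sum_congr rfl fun t _ => ?_
    rw [← RX_inner, ← mul_add, ← mul_add, ← EX_add, ← EX_add]
    congr 2; funext w; ring
  rw [e]
  linarith

lemma GB.base (c : T → ℝ) (i : T → A) (j : T → B) : GB c i j (∑ t, |c t|) := by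
  intro k u v hu hv
  refine Finset.sum_le_sum fun t _ => ?_
  have h1 : |∑ l, u (i t) l * v (j t) l| ≤ 1 := by
    rw [abs_le]
    have e1 : ∑ l, (u (i t) l * v (j t) l) ≤ ∑ l, (u (i t) l ^ 2 + v (j t) l ^ 2) / 2 :=
      Finset.sum_le_sum fun l _ => by nlinarith [sq_nonneg (u (i t) l - v (j t) l)]
    have e2 : ∑ l, -((u (i t) l ^ 2 + v (j t) l ^ 2) / 2) ≤ ∑ l, (u (i t) l * v (j t) l) :=
      Finset.sum_le_sum fun l _ => by nlinarith [sq_nonneg (u (i t) l + v (j t) l)]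
    rw [Finset.sum_neg_distrib] at e2
    rw [← Finset.sum_div, Finset.sum_add_distrib] at e1 e2
    have := hu (i t); have := hv (j t)
    constructor <;> linarith
  calc _ ≤ |c t * ∑ l, u (i t) l * v (j t) l| := le_abs_self _
    _ = |c t| * |∑ l, u (i t) l * v (j t) l| := abs_mul _ _
    _ ≤ |c t| * 1 := mul_le_mul_of_nonneg_left h1 (abs_nonneg _)
    _ = _ := mul_one _

/-- Grothendieck's inequality. -/
lemma groth [Fintype A] [Fintype B] (c : T → ℝ) (i : T → A) (j : T → B) (D : ℝ)
    (h : ∀ (s : A → Bool) (r : B → Bool), ∑ t, c t * (sg (s (i t)) * sg (r (j t))) ≤ D) :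
    GB c i j (49/8 * D) := by
  have h0 : ∀ N : ℕ, GB c i j (49/8 * D + (∑ t, |c t| - 49/8 * D) * (1/2) ^ N) := by
    intro N
    induction N with
    | zero => simpa using GB.base c i j
    | succ N ih =>
      have := ih.step h
      convert this using 1
      rw [pow_succ]; ring
  intro k u v hu hv
  have hlim : Filter.Tendsto (fun N : ℕ => 49/8 * D + (∑ t, |c t| - 49/8 * D) * (1/2 : ℝ) ^ N)
      Filter.atTop (nhds (49/8 * D + (∑ t, |c t| - 49/8 * D) * 0)) :=
    ((tendsto_pow_atTop_nhds_zero_of_lt_one (by norm_num) (by norm_num)).const_mul _).const_add _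
  rw [mul_zero, add_zero] at hlim
  exact ge_of_tendsto' hlim fun N => h0 N k u v hu hv
end groth

/-! Properties of the loss and of the max-norm ball. -/

lemma loss_lip (α : ℝ) (F : ℝ → ℝ) (hdiff : Differentiable ℝ F)
    (hrange : ∀ x, 0 < F x ∧ F x < 1) (Lα : ℝ)
    (hL : IsLUB ((fun x => |deriv F x| / (F x * (1 - F x))) '' Set.Icc (-α) α) Lα)
    (s : ℝ) (hs : s = 1 ∨ s = -1) (x y : ℝ) (hx : |x| ≤ α) (hy : |y| ≤ α) :
    |oneBitLoss F x s - oneBitLoss F y s| ≤ Lα * |x - y| := by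
  have hb : ∀ z ∈ Set.Icc (-α) α, |deriv F z| / (F z * (1 - F z)) ≤ Lα := fun z hz =>
    hL.1 ⟨z, hz, rfl⟩
  rcases hs with rfl | rfl
  · have e : ∀ z, oneBitLoss F z 1 = -Real.log (F z) := by
      intro z; unfold oneBitLoss; norm_num
    have := Convex.norm_image_sub_le_of_norm_hasDerivWithin_le (𝕜 := ℝ)
      (f := fun z => -Real.log (F z)) (f' := fun z => -(deriv F z / F z)) (s := Set.Icc (-α) α)
      (C := Lα) (x := y) (y := x)
      (fun z _ => (((hdiff z).hasDerivAt.log (hrange z).1.ne').neg).hasDerivWithinAt)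
      (fun z hz => by
        refine le_trans ?_ (hb z hz)
        obtain ⟨h0, h1⟩ := hrange z
        rw [Real.norm_eq_abs, abs_neg, abs_div, abs_of_pos h0]
        apply div_le_div_of_nonneg_left (abs_nonneg _) (by nlinarith) (by nlinarith))
      (convex_Icc _ _) (abs_le.1 hy) (abs_le.1 hx)
    rw [e, e]; exact this
  · have e : ∀ z, oneBitLoss F z (-1) = -Real.log (1 - F z) := by
      intro z; unfold oneBitLoss; norm_num
    have := Convex.norm_image_sub_le_of_norm_hasDerivWithin_le (𝕜 := ℝ)
      (f := fun z => -Real.log (1 - F z)) (f' := fun z => -(-deriv F z / (1 - F z)))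
      (s := Set.Icc (-α) α)
      (C := Lα) (x := y) (y := x)
      (fun z _ => ((((hdiff z).hasDerivAt.const_sub 1).log
        (by linarith [(hrange z).2] : (0:ℝ) < 1 - F z).ne').neg).hasDerivWithinAt)
      (fun z hz => by
        refine le_trans ?_ (hb z hz)
        obtain ⟨h0, h1⟩ := hrange z
        have h2 : 0 < 1 - F z := by linarith
        rw [Real.norm_eq_abs, abs_neg, abs_div, abs_neg, abs_of_pos h2]
        apply div_le_div_of_nonneg_left (abs_nonneg _) (by nlinarith) (by nlinarith))
      (convex_Icc _ _) (abs_le.1 hy) (abs_le.1 hx)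
    rw [e, e]; exact this

lemma loss_range (α : ℝ) (F : ℝ → ℝ)
    (hrange : ∀ x, 0 < F x ∧ F x < 1) (Uα : ℝ)
    (hU : IsLUB ((fun x => Real.log (1 / (F x * (1 - F x)))) '' Set.Icc (-α) α) Uα)
    (s : ℝ) (hs : s = 1 ∨ s = -1) (x : ℝ) (hx : |x| ≤ α) :
    0 ≤ oneBitLoss F x s ∧ oneBitLoss F x s ≤ Uα := by
  have hb : Real.log (1 / (F x * (1 - F x))) ≤ Uα := hU.1 ⟨x, abs_le.1 hx, rfl⟩
  obtain ⟨h0, h1⟩ := hrange x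
  have h2 : 0 < 1 - F x := by linarith
  have e : Real.log (1 / (F x * (1 - F x))) = -Real.log (F x) + -Real.log (1 - F x) := by
    rw [one_div, Real.log_inv, Real.log_mul h0.ne' h2.ne']; ring
  have l1 := Real.log_nonpos h0.le h1.le
  have l2 := Real.log_nonpos h2.le (by linarith)
  rcases hs with rfl | rfl
  · have e' : oneBitLoss F x 1 = -Real.log (F x) := by unfold oneBitLoss; norm_num
    rw [e']; constructor <;> linarith
  · have e' : oneBitLoss F x (-1) = -Real.log (1 - F x) := by unfold oneBitLoss; norm_num
    rw [e']; constructor <;> linarith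

lemma U_pos (α : ℝ) (hα : 0 < α) (F : ℝ → ℝ)
    (hrange : ∀ x, 0 < F x ∧ F x < 1) (Uα : ℝ)
    (hU : IsLUB ((fun x => Real.log (1 / (F x * (1 - F x)))) '' Set.Icc (-α) α) Uα) : 0 < Uα := by
  have hb : Real.log (1 / (F 0 * (1 - F 0))) ≤ Uα :=
    hU.1 ⟨0, ⟨by linarith, hα.le⟩, rfl⟩
  refine lt_of_lt_of_le (Real.log_pos ?_) hb
  obtain ⟨h0, h1⟩ := hrange 0
  rw [one_div]
  apply (one_lt_inv₀ (by nlinarith)).2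
  nlinarith

lemma L_nonneg (α : ℝ) (hα : 0 < α) (F : ℝ → ℝ)
    (hrange : ∀ x, 0 < F x ∧ F x < 1) (Lα : ℝ)
    (hL : IsLUB ((fun x => |deriv F x| / (F x * (1 - F x))) '' Set.Icc (-α) α) Lα) : 0 ≤ Lα := by
  refine le_trans ?_ (hL.1 ⟨0, ⟨by linarith, hα.le⟩, rfl⟩)
  obtain ⟨h0, h1⟩ := hrange 0
  exact div_nonneg (abs_nonneg _) (by nlinarith)

lemma entry_le {d1 d2 : ℕ} (M : Matrix (Fin d1) (Fin d2) ℝ) (k : Fin d1) (l : Fin d2) :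
    |M k l| ≤ linfNorm M :=
  (le_ciSup (f := fun l => |M k l|) (Set.finite_range _).bddAbove l).trans
    (le_ciSup (f := fun k => ⨆ l, |M k l|) (Set.finite_range _).bddAbove k)

lemma row_le {n k : ℕ} (U : Matrix (Fin n) (Fin k) ℝ) (i : Fin n) :
    ∑ j, U i j ^ 2 ≤ rowMaxNorm U ^ 2 := by
  have h := le_ciSup (f := fun i => Real.sqrt (∑ j, (U i j) ^ 2)) (Set.finite_range _).bddAbove i
  exact (Real.sqrt_le_left (rowMaxNorm_nonneg U)).1 h

lemma maxNorm_dual {d1 d2 : ℕ} (hd : 0 < d1) (M : Matrix (Fin d1) (Fin d2) ℝ) (R : ℝ)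
    (hM : maxNorm M ≤ R) {T : Type} [Fintype T] (c : T → ℝ) (S : T → Fin d1 × Fin d2) (D : ℝ)
    (h : ∀ (s : Fin d1 → Bool) (r : Fin d2 → Bool),
      ∑ t, c t * (sg (s (S t).1) * sg (r (S t).2)) ≤ D) :
    ∑ t, c t * M (S t).1 (S t).2 ≤ R * (49/8 * D) := by
  have hD : 0 ≤ D := by
    have := cube_bilin c (fun t => (S t).1) (fun t => (S t).2) D h 0 0 (by simp) (by simp)
    simpa using this
  have hG := groth c (fun t => (S t).1) (fun t => (S t).2) D h
  have key : ∀ e : ℝ, 0 < e → ∑ t, c t * M (S t).1 (S t).2 ≤ (R + e) * (49/8 * D) := by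
    intro e he
    have hne : { c : ℝ | ∃ (k : ℕ) (U : Matrix (Fin d1) (Fin k) ℝ) (V : Matrix (Fin d2) (Fin k) ℝ),
        0 < k ∧ M = U * Vᵀ ∧ c = rowMaxNorm U * rowMaxNorm V }.Nonempty :=
      ⟨_, d1, 1, Mᵀ, hd, by simp, rfl⟩
    have hlt : maxNorm M < R + e := by linarith
    obtain ⟨q, ⟨k, U, V, _, hUV, rfl⟩, hq⟩ := exists_lt_of_csInf_lt hne hlt
    have h1 := hG.scale (fun a l => U a l) (fun b l => V b l) (rowMaxNorm U) (rowMaxNorm V)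
      (rowMaxNorm_nonneg _) (rowMaxNorm_nonneg _) (row_le U) (row_le V)
    have e1 : ∀ a b, M a b = ∑ l, U a l * V b l := by
      intro a b; rw [hUV, Matrix.mul_apply]; simp [Matrix.transpose_apply]
    simp only [e1]
    refine h1.trans ?_
    exact mul_le_mul_of_nonneg_right hq.le (by positivity)
  have hlim : Filter.Tendsto (fun e : ℝ => (R + e) * (49/8 * D)) (nhdsWithin 0 (Set.Ioi 0))
      (nhds ((R + 0) * (49/8 * D))) := by
    apply tendsto_nhdsWithin_of_tendsto_nhds
    exact Continuous.tendsto (by fun_prop) 0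
  rw [add_zero] at hlim
  refine ge_of_tendsto hlim ?_
  filter_upwards [self_mem_nhdsWithin] with e he using key e he

lemma zero_mem {d1 d2 : ℕ} (α R : ℝ) (hα : 0 < α) (hR : 0 < R) :
    linfNorm (0 : Matrix (Fin d1) (Fin d2) ℝ) ≤ α ∧
      maxNorm (0 : Matrix (Fin d1) (Fin d2) ℝ) ≤ R := by
  constructor
  · refine Real.iSup_le (fun k => Real.iSup_le (fun l => ?_) hα.le) hα.le
    simpa using hα.le
  · have h0 : ∀ n, rowMaxNorm (0 : Matrix (Fin n) (Fin 1) ℝ) = 0 := by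
      intro n; simp [rowMaxNorm]
    refine le_trans (csInf_le ⟨0, ?_⟩ ⟨1, 0, 0, one_pos, by simp, rfl⟩) ?_
    · rintro _ ⟨k, U, V, _, _, rfl⟩
      exact mul_nonneg (rowMaxNorm_nonneg _) (rowMaxNorm_nonneg _)
    · rw [h0, h0]; simpa using hR.le

/-- Rademacher complexity of the max-norm ball. -/
lemma rad_maxNorm (d1 d2 n : ℕ) (hd : 0 < d1) (hn : 0 < n) (α R : ℝ) (hα : 0 < α) (hR : 0 < R)
    (L : ℝ) (hL : 0 ≤ L) (S : Fin n → Fin d1 × Fin d2) :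
    EX (fun _ : Bool => (1/2 : ℝ)) n
      (fun b => ⨆ M : { M : Matrix (Fin d1) (Fin d2) ℝ | linfNorm M ≤ α ∧ maxNorm M ≤ R },
        (0 + 2 * L * ∑ t, sg (b t) * M.1 (S t).1 (S t).2)) ≤
      n * (17 * L * R * Real.sqrt ((d1 + d2 : ℝ) / n)) := by
  haveI : Nonempty { M : Matrix (Fin d1) (Fin d2) ℝ | linfNorm M ≤ α ∧ maxNorm M ≤ R } :=
    ⟨⟨0, zero_mem α R hα hR⟩⟩
  let J := (Fin d1 → Bool) × (Fin d2 → Bool)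
  let z : J → Fin n → ℝ := fun j t => sg (j.1 (S t).1) * sg (j.2 (S t).2)
  have hsg : ∀ b, |sg b| = 1 := by intro b; cases b <;> simp [sg]
  have h1 : ∀ b : Fin n → Bool,
      (⨆ M : { M : Matrix (Fin d1) (Fin d2) ℝ | linfNorm M ≤ α ∧ maxNorm M ≤ R },
        (0 + 2 * L * ∑ t, sg (b t) * M.1 (S t).1 (S t).2)) ≤
      (2 * L * (R * (49/8))) * ⨆ j, ∑ t, sg (b t) * z j t := by
    intro b
    refine ciSup_le fun M => ?_
    have := maxNorm_dual hd M.1 R M.2.2 (fun t => sg (b t)) S (⨆ j, ∑ t, sg (b t) * z j t)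
      (fun s r => le_ciSup (f := fun j => ∑ t, sg (b t) * z j t)
        (Set.finite_range _).bddAbove (s, r))
    have := mul_le_mul_of_nonneg_left this (by positivity : 0 ≤ 2 * L)
    linarith
  refine (EX_mono half_nonneg h1).trans ?_
  rw [EX_smul]
  set q := Real.sqrt ((d1 + d2 : ℝ) / n) with hq
  have hn' : (0:ℝ) < n := by exact_mod_cast hn
  have hd' : (0:ℝ) < d1 := by exact_mod_cast hd
  have hq0 : 0 < q := Real.sqrt_pos.2 (by positivity)
  have hq2 : n * q ^ 2 = d1 + d2 := by
    rw [hq, Real.sq_sqrt (by positivity)]; field_simp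
  have h2 := rad_max n z (fun j t => by simp [z, abs_mul, hsg]) q hq0.le
  have hc : Real.log (Fintype.card J) = (d1 + d2) * Real.log 2 := by
    simp only [J, Fintype.card_prod, Fintype.card_fun, Fintype.card_bool, Fintype.card_fin]
    push_cast
    rw [← pow_add, Real.log_pow]; push_cast; ring
  rw [hc] at h2
  have hlog := Real.log_two_lt_d9
  have h3 : EX (fun _ : Bool => (1/2 : ℝ)) n (fun b => ⨆ j, ∑ t, sg (b t) * z j t) ≤
      6/5 * (n * q) := by
    refine le_of_mul_le_mul_left (h2.trans ?_) hq0
    rw [← hq2]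
    have : 0 < n * q ^ 2 := by positivity
    nlinarith
  have h4 := mul_le_mul_of_nonneg_left h3 (by positivity : 0 ≤ 2 * L * (R * (49/8)))
  have h5 : 0 ≤ L * R * (n * q) := by positivity
  linarith

/-- uniform deviation bound over the max-norm ball `K_max(α,R)`. For a fixed
sign matrix `Y`, with probability at least `1 − δ` over the i.i.d. draw (from `Π`) of the
sample `S` of `n` index pairs,
`sup_{M ∈ K_max(α,R)} [ Σ_{k,l} π_{kl} g(M_{k,l}; Y_{k,l}) − (1/n) Σ_t g(M_{i_t,j_t}; Y_{i_t,j_t}) ]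
  ≤ 17 L_α R √(d/n) + U_α √(8 log(2/δ)/n)`, where `d = d1 + d2`. -/
theorem uniform_deviation_bound_maxNorm_ball
    (d1 d2 n : ℕ) (hn : 2 < n) (hn' : n ≤ d1 * d2)
    (α R : ℝ) (hα : 0 < α) (hR : 0 < R)
    (F : ℝ → ℝ) (hdiff : Differentiable ℝ F) (hrange : ∀ x, 0 < F x ∧ F x < 1)
    (hF' : ∀ x ∈ Set.Icc (-α) α, deriv F x ≠ 0)
    (Lα Uα : ℝ)
    (hL : IsLUB ((fun x => |deriv F x| / (F x * (1 - F x))) '' Set.Icc (-α) α) Lα)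
    (hU : IsLUB ((fun x => Real.log (1 / (F x * (1 - F x)))) '' Set.Icc (-α) α) Uα)
    (Y : Matrix (Fin d1) (Fin d2) ℝ) (hY : ∀ k l, Y k l = 1 ∨ Y k l = -1)
    (π : Fin d1 → Fin d2 → ℝ) (hπ : ∀ k l, 0 ≤ π k l) (hπ1 : ∑ k, ∑ l, π k l = 1)
    (δ : ℝ) (hδ : 0 < δ) :
    1 - δ ≤
      ∑ S : Fin n → Fin d1 × Fin d2,
        Set.indicator
          { S : Fin n → Fin d1 × Fin d2 |
            sSup ((fun M : Matrix (Fin d1) (Fin d2) ℝ =>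
                (∑ k, ∑ l, π k l * oneBitLoss F (M k l) (Y k l)) -
                  (1 / n : ℝ) *
                    ∑ t, oneBitLoss F (M (S t).1 (S t).2) (Y (S t).1 (S t).2)) ''
              { M : Matrix (Fin d1) (Fin d2) ℝ | linfNorm M ≤ α ∧ maxNorm M ≤ R }) ≤
              17 * Lα * R * Real.sqrt ((d1 + d2 : ℝ) / n) +
                Uα * Real.sqrt (8 * Real.log (2 / δ) / n) }
          (fun S => ∏ t, π (S t).1 (S t).2) S := by
  rcases le_total 1 δ with h1δ | hδ1
  · refine le_trans (by linarith : 1 - δ ≤ 0) (Finset.sum_nonneg fun S _ => ?_)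
    exact Set.indicator_nonneg (fun S _ => Finset.prod_nonneg fun t _ => hπ _ _) S
  have hn0 : 0 < n := by omega
  have hnR : (0:ℝ) < n := by exact_mod_cast hn0
  have hd : 0 < d1 := by
    rcases Nat.eq_zero_or_pos d1 with h | h
    · rw [h] at hn'; omega
    · exact h
  have hU0 := U_pos α hα F hrange Uα hU
  have hL0 := L_nonneg α hα F hrange Lα hL
  let K := { M : Matrix (Fin d1) (Fin d2) ℝ | linfNorm M ≤ α ∧ maxNorm M ≤ R }
  haveI : Nonempty K := ⟨⟨0, zero_mem α R hα hR⟩⟩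
  let p : Fin d1 × Fin d2 → ℝ := fun x => π x.1 x.2
  have hp : ∀ x, 0 ≤ p x := fun x => hπ _ _
  have hp1 : ∑ x, p x = 1 := by rw [Fintype.sum_prod_type]; exact hπ1
  let g : K → Fin d1 × Fin d2 → ℝ := fun M x => oneBitLoss F (M.1 x.1 x.2) (Y x.1 x.2)
  let m : K → Fin d1 × Fin d2 → ℝ := fun M x => M.1 x.1 x.2
  have hmα : ∀ M x, |m M x| ≤ α := fun M x => (entry_le _ _ _).trans M.2.1
  have hgr : ∀ M x, 0 ≤ g M x ∧ g M x ≤ Uα := fun M x =>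
    loss_range α F hrange Uα hU _ (hY _ _) _ (hmα M x)
  have hgB : ∀ x, Bd (fun M => g M x) := fun x =>
    ⟨Uα, fun M => by rw [abs_of_nonneg (hgr M x).1]; exact (hgr M x).2⟩
  have hmB : ∀ x, Bd (fun M => m M x) := fun x => ⟨α, fun M => hmα M x⟩
  have hlip : ∀ M N x, |g M x - g N x| ≤ Lα * |m M x - m N x| := fun M N x =>
    loss_lip α F hdiff hrange Lα hL _ (hY _ _) _ _ (hmα M x) (hmα N x)
  let f : (Fin n → Fin d1 × Fin d2) → ℝ := fun S =>
    ⨆ M : K, ((∑ x, p x * g M x) - (1 / n : ℝ) * ∑ t, g M (S t))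
  have hfe : ∀ S, f S = (1 / n : ℝ) * ⨆ M : K, (0 + ∑ t, ((∑ x, p x * g M x) - g M (S t))) := by
    intro S
    rw [Real.mul_iSup_of_nonneg (by positivity)]
    refine iSup_congr fun M => ?_
    rw [Finset.sum_sub_distrib]
    simp only [Finset.sum_const, Finset.card_univ, Fintype.card_fin, nsmul_eq_mul]
    field_simp
    ring
  have hmean : EX p n f ≤ 17 * Lα * R * Real.sqrt ((d1 + d2 : ℝ) / n) := by
    have e : f = fun S => (1 / n : ℝ) *
      ⨆ M : K, (0 + ∑ t, ((∑ x, p x * g M x) - g M (S t))) := funext hfe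
    rw [e, EX_smul]
    have h1 := sym hp hp1 g m hgB hmB Lα hlip n (fun _ => 0) Bd.zero
    have h2 : EX p n (fun S => EX (fun _ : Bool => (1/2 : ℝ)) n
        (fun b => ⨆ i, (0 + 2 * Lα * ∑ t, sg (b t) * m i (S t)))) ≤
        n * (17 * Lα * R * Real.sqrt ((d1 + d2 : ℝ) / n)) := by
      rw [← EX_const hp1 n (n * (17 * Lα * R * Real.sqrt ((d1 + d2 : ℝ) / n)))]
      exact EX_mono hp fun S => rad_maxNorm d1 d2 n hd hn0 α R hα hR Lα hL0 S
    have h3 := mul_le_mul_of_nonneg_left (h1.trans h2) (by positivity : (0:ℝ) ≤ 1 / n)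
    refine h3.trans (le_of_eq ?_)
    field_simp
  have hbd : ∀ t S S', (∀ s, s ≠ t → S s = S' s) → f S ≤ f S' + Uα / n := by
    intro t S S' hS
    refine ciSup_le fun M => ?_
    have hB : Bd (fun M : K => (∑ x, p x * g M x) - (1 / n : ℝ) * ∑ t, g M (S' t)) :=
      (Bd.sum _ fun x => (hgB x).smul _).sub ((Bd.sum _ fun t => hgB (S' t)).smul _)
    have h1 := hB.le M
    have h2 : ∑ s, g M (S' s) ≤ ∑ s, g M (S s) + Uα := by
      rw [← Finset.add_sum_erase _ _ (Finset.mem_univ t),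
        ← Finset.add_sum_erase _ (fun s => g M (S s)) (Finset.mem_univ t)]
      have : ∑ s ∈ Finset.univ.erase t, g M (S' s) = ∑ s ∈ Finset.univ.erase t, g M (S s) :=
        Finset.sum_congr rfl fun s hs => by rw [hS s (Finset.ne_of_mem_erase hs)]
      rw [this]
      linarith [(hgr M (S' t)).2, (hgr M (S t)).1]
    have h3 := mul_le_mul_of_nonneg_left h2 (by positivity : (0:ℝ) ≤ 1 / n)
    have h4 : Uα / n = 1 / n * Uα := by ring
    have h5 : (∑ x, p x * g M x) - (1 / n : ℝ) * ∑ t, g M (S' t) ≤ f S' := h1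
    rw [h4]
    linarith
  have hlog : 0 < Real.log (2 / δ) := Real.log_pos (by rw [lt_div_iff₀ hδ]; linarith)
  set e := Uα * Real.sqrt (8 * Real.log (2 / δ) / n) with he
  have htail := mcd_tail hp hp1 (Uα / n) (by positivity) n hn0 f hbd e (by positivity)
  have hexp : Real.exp (-(e ^ 2 / (2 * n * (Uα / n) ^ 2))) ≤ δ := by
    have h1 : e ^ 2 / (2 * n * (Uα / n) ^ 2) = 4 * Real.log (2 / δ) := by
      rw [he, mul_pow, Real.sq_sqrt (by positivity)]
      field_simp
      ring
    rw [h1]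
    calc Real.exp (-(4 * Real.log (2 / δ))) ≤ Real.exp (-Real.log (2 / δ)) :=
          Real.exp_le_exp.2 (by linarith)
      _ = δ / 2 := by rw [Real.exp_neg, Real.exp_log (by positivity), inv_div]
      _ ≤ δ := by linarith
  refine (by linarith : 1 - δ ≤ _).trans (htail.trans ?_)
  unfold EX
  refine Finset.sum_le_sum fun S _ => ?_
  have hfS : sSup ((fun M : Matrix (Fin d1) (Fin d2) ℝ =>
                (∑ k, ∑ l, π k l * oneBitLoss F (M k l) (Y k l)) -
                  (1 / n : ℝ) *
                    ∑ t, oneBitLoss F (M (S t).1 (S t).2) (Y (S t).1 (S t).2)) ''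
              { M : Matrix (Fin d1) (Fin d2) ℝ | linfNorm M ≤ α ∧ maxNorm M ≤ R }) = f S := by
    rw [sSup_image']
    refine iSup_congr fun M => ?_
    rw [Fintype.sum_prod_type]
  by_cases hS : f S ≤ EX p n f + e
  · rw [Set.indicator_of_mem (by exact hS), mul_one, Set.indicator_of_mem]
    rw [Set.mem_ofPred_eq, hfS]
    linarith
  · rw [Set.indicator_of_notMem (by exact hS), mul_zero]
    exact Set.indicator_nonneg (fun S _ => Finset.prod_nonneg fun t _ => hπ _ _) S
end

section
/- There exists an absolute constant C > 0 with the following property. Let d1, d2 ≥ 1, d = d1 + d2, α, R > 0, and let F : ℝ → (0,1) be differentiable with F and F' nonzero on [−α, α] and with L_α, β_α, U_α finite (Condition U). Let M* ∈ K_max(α, R), let Π = (π_{kl}) be any probability distribution on [d1]×[d2], and let S = ((i₁,j₁), …, (iₙ,jₙ)) be drawn i.i.d. from Π with 2 < n ≤ d1 d2. Given S, let Y_{i_t,j_t} ∈ {−1, +1} be independent with P(Y_{i_t,j_t} = 1) = F(M*_{i_t,j_t}), and let M̂_max be any minimizer over K_max(α, R) of the negative log-likelihood ℓ_S(M; Y)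 = Σ_{t=1}^n [ 1{Y_{i_t,j_t}=1} log(1/F(M_{i_t,j_t})) + 1{Y_{i_t,j_t}=−1} log(1/(1−F(M_{i_t,j_t}))) ]. Then for any δ > 0, with probability at least 1 − δ, ‖M̂_max − M*‖_Π² = Σ_{k,l} π_{kl} (M̂_max − M*)_{k,l}² ≤ C β_α { L_α R √(d/n) + U_α √( log(4/δ)/n ) }. -/
open scoped BigOperators
open Matrix

/-- The negative log-likelihood `ℓ_S(M; Y)` of the matrix `M` for observed signs
`y : Fin n → Bool` (`y t = true` encodes `Y_{i_t,j_t} = +1`) at sampled index pairs `S`. -/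
noncomputable def negLogLik {d1 d2 n : ℕ} (F : ℝ → ℝ)
    (S : Fin n → Fin d1 × Fin d2) (y : Fin n → Bool)
    (M : Matrix (Fin d1) (Fin d2) ℝ) : ℝ :=
  ∑ t, if y t then Real.log (1 / F (M (S t).1 (S t).2))
    else Real.log (1 / (1 - F (M (S t).1 (S t).2)))

/-- The probability weight of the outcome `(S, y)` under i.i.d. sampling of the index pairs
from `Π` and, given `S`, independent signs with `P(Y_{i_t,j_t} = 1) = F(M*_{i_t,j_t})`. -/
noncomputable def sampleWeight {d1 d2 n : ℕ} (F : ℝ → ℝ) (π : Fin d1 → Fin d2 → ℝ)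
    (Mstar : Matrix (Fin d1) (Fin d2) ℝ)
    (S : Fin n → Fin d1 × Fin d2) (y : Fin n → Bool) : ℝ :=
  ∏ t, π (S t).1 (S t).2 *
    (if y t then F (Mstar (S t).1 (S t).2) else 1 - F (Mstar (S t).1 (S t).2))

namespace MNorm

lemma sum_cons {X : Type*} [Fintype X] {n : ℕ} (G : (Fin (n+1) → X) → ℝ) :
    ∑ x, G x = ∑ a, ∑ x : Fin n → X, G (Fin.cons a x) := by
  rw [← (Fin.consEquiv (fun _ : Fin (n+1) => X)).sum_comp, Fintype.sum_prod_type]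
  rfl

lemma sum_W {X : Type*} [Fintype X] (w : X → ℝ) (h1 : ∑ x, w x = 1) (n : ℕ) :
    ∑ x : Fin n → X, ∏ t, w (x t) = 1 := by
  induction n with
  | zero => simp
  | succ n ih =>
    rw [sum_cons]
    simp only [Fin.prod_univ_succ, Fin.cons_zero, Fin.cons_succ]
    simp only [← Finset.mul_sum, ih, mul_one, h1]

lemma abs_avg {X : Type*} [Fintype X] (w : X → ℝ) (hw : ∀ x, 0 ≤ w x) (h1 : ∑ x, w x = 1)
    (g : X → ℝ) (c : ℝ) (hg : ∀ x, |g x| ≤ c) : |∑ x, w x * g x| ≤ c := by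
  calc |∑ x, w x * g x| ≤ ∑ x, |w x * g x| := Finset.abs_sum_le_sum_abs _ _
    _ ≤ ∑ x, w x * c := by
        apply Finset.sum_le_sum
        intro x _
        rw [abs_mul, abs_of_nonneg (hw x)]
        exact mul_le_mul_of_nonneg_left (hg x) (hw x)
    _ = c := by rw [← Finset.sum_mul, h1, one_mul]

lemma hoeff {X : Type*} [Fintype X] (w : X → ℝ) (hw : ∀ x, 0 ≤ w x) (h1 : ∑ x, w x = 1)
    (g : X → ℝ) (c : ℝ) (hc : 0 < c) (hg : ∀ x, |g x| ≤ c) (hm : ∑ x, w x * g x = 0) :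
    ∑ x, w x * Real.exp (g x) ≤ Real.exp (c ^ 2 / 2) := by
  have key : ∀ x, Real.exp (g x) ≤ Real.cosh c + g x * (Real.sinh c / c) := by
    intro x
    have hx := abs_le.1 (hg x)
    have h := convexOn_exp.2 (Set.mem_univ c) (Set.mem_univ (-c))
      (show 0 ≤ (c + g x) / (2 * c) from div_nonneg (by linarith) (by linarith))
      (show 0 ≤ (c - g x) / (2 * c) from div_nonneg (by linarith) (by linarith))
      (by field_simp; ring)
    simp only [smul_eq_mul] at h
    have e : (c + g x) / (2 * c) * c + (c - g x) / (2 * c) * -c = g x := by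
      field_simp; ring
    rw [e] at h
    refine h.trans (le_of_eq ?_)
    rw [Real.cosh_eq, Real.sinh_eq]
    field_simp; ring
  calc ∑ x, w x * Real.exp (g x) ≤ ∑ x, w x * (Real.cosh c + g x * (Real.sinh c / c)) :=
        Finset.sum_le_sum fun x _ => mul_le_mul_of_nonneg_left (key x) (hw x)
    _ = (∑ x, w x) * Real.cosh c + (∑ x, w x * g x) * (Real.sinh c / c) := by
        rw [Finset.sum_mul, Finset.sum_mul, ← Finset.sum_add_distrib]
        apply Finset.sum_congr rfl; intros; ring
    _ = Real.cosh c := by rw [h1, hm]; ring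
    _ ≤ _ := Real.cosh_le_exp_half_sq c

lemma mcd {X : Type*} [Fintype X] (w : X → ℝ) (hw : ∀ x, 0 ≤ w x) (h1 : ∑ x, w x = 1)
    (c : ℝ) (hc : 0 < c) (n : ℕ) : ∀ f : (Fin n → X) → ℝ,
    (∀ x y t, (∀ s, s ≠ t → x s = y s) → |f x - f y| ≤ c) →
    ∑ x : Fin n → X, (∏ t, w (x t)) * Real.exp (f x - ∑ y : Fin n → X, (∏ t, w (y t)) * f y)
      ≤ Real.exp (n * (c ^ 2 / 2)) := by
  induction n with
  | zero => intro f _; simp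
  | succ n ih =>
    intro f hf
    set Ef := ∑ y : Fin (n+1) → X, (∏ t, w (y t)) * f y with hEf
    set m : X → ℝ := fun a => ∑ y : Fin n → X, (∏ t, w (y t)) * f (Fin.cons a y) with hm
    have hWn : ∀ x : Fin n → X, 0 ≤ ∏ t, w (x t) := fun x => Finset.prod_nonneg fun t _ => hw _
    have hE : Ef = ∑ a, w a * m a := by
      rw [hEf, sum_cons]
      simp only [Fin.prod_univ_succ, Fin.cons_zero, Fin.cons_succ, hm, Finset.mul_sum, mul_assoc]
    have hmd : ∀ a b, |m a - m b| ≤ c := by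
      intro a b
      have : m a - m b = ∑ y : Fin n → X, (∏ t, w (y t)) * (f (Fin.cons a y) - f (Fin.cons b y)) := by
        simp only [hm, mul_sub, Finset.sum_sub_distrib]
      rw [this]
      refine abs_avg _ hWn (sum_W w h1 n) _ c ?_
      intro y
      apply hf _ _ 0
      intro s hs
      obtain ⟨s', rfl⟩ := Fin.exists_succ_eq.2 hs
      simp
    have hmE : ∀ a, |m a - Ef| ≤ c := by
      intro a
      have : m a - Ef = ∑ b, w b * (m a - m b) := by
        simp only [mul_sub, Finset.sum_sub_distrib, ← Finset.sum_mul, h1, hE, one_mul]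
      rw [this]
      exact abs_avg w hw h1 _ c (hmd a)
    have hmz : ∑ a, w a * (m a - Ef) = 0 := by
      simp only [mul_sub, Finset.sum_sub_distrib, ← Finset.sum_mul, h1, ← hE, one_mul, sub_self]
    rw [sum_cons]
    calc _ = ∑ a, w a * (Real.exp (m a - Ef) * ∑ y : Fin n → X, (∏ t, w (y t)) *
              Real.exp (f (Fin.cons a y) - m a)) := by
          simp only [Fin.prod_univ_succ, Fin.cons_zero, Fin.cons_succ, Finset.mul_sum]
          apply Finset.sum_congr rfl; intro a _
          apply Finset.sum_congr rfl; intro y _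
          have : f (Fin.cons a y) - Ef = (m a - Ef) + (f (Fin.cons a y) - m a) := by ring
          rw [this, Real.exp_add]; ring
      _ ≤ ∑ a, w a * (Real.exp (m a - Ef) * Real.exp (n * (c ^ 2 / 2))) := by
          apply Finset.sum_le_sum; intro a _
          apply mul_le_mul_of_nonneg_left _ (hw a)
          apply mul_le_mul_of_nonneg_left _ (Real.exp_pos _).le
          apply ih
          intro x y t h
          apply hf _ _ t.succ
          intro s hs
          refine Fin.cases ?_ (fun s' => ?_) s hs
          · intro _; simp
          · intro hs; simp only [Fin.cons_succ]; apply h; rintro rfl; exact hs rfl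
      _ = (∑ a, w a * Real.exp (m a - Ef)) * Real.exp (n * (c ^ 2 / 2)) := by
          rw [Finset.sum_mul]; apply Finset.sum_congr rfl; intros; ring
      _ ≤ Real.exp (c ^ 2 / 2) * Real.exp (n * (c ^ 2 / 2)) := by
          apply mul_le_mul_of_nonneg_right _ (Real.exp_pos _).le
          exact hoeff w hw h1 _ c hc hmE hmz
      _ = _ := by rw [← Real.exp_add]; congr 1; push_cast; ring

open Classical in
/-- McDiarmid tail bound. -/
lemma mcd_tail {X : Type*} [Fintype X] (w : X → ℝ) (hw : ∀ x, 0 ≤ w x) (h1 : ∑ x, w x = 1)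
    (c : ℝ) (hc : 0 < c) (n : ℕ) (hn : 0 < n) (f : (Fin n → X) → ℝ)
    (hf : ∀ x y t, (∀ s, s ≠ t → x s = y s) → |f x - f y| ≤ c) (s : ℝ) (hs : 0 < s) :
    ∑ x : Fin n → X, (if s ≤ f x - ∑ y : Fin n → X, (∏ t, w (y t)) * f y then ∏ t, w (x t) else 0)
      ≤ Real.exp (- (s ^ 2 / (2 * n * c ^ 2))) := by
  have hn' : (0:ℝ) < n := by exact_mod_cast hn
  set l := s / (n * c ^ 2) with hl
  have hl0 : 0 < l := by positivity
  have h := mcd w hw h1 (l * c) (by positivity) n (fun x => l * f x) (by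
    intro x y t hxy
    rw [← mul_sub, abs_mul, abs_of_pos hl0]
    exact mul_le_mul_of_nonneg_left (hf x y t hxy) hl0.le)
  set Ef := ∑ y : Fin n → X, (∏ t, w (y t)) * f y with hEf
  have e1 : ∑ y : Fin n → X, (∏ t, w (y t)) * (l * f y) = l * Ef := by
    rw [hEf, Finset.mul_sum]; apply Finset.sum_congr rfl; intros; ring
  simp only [e1] at h
  have hWn : ∀ x : Fin n → X, 0 ≤ ∏ t, w (x t) := fun x => Finset.prod_nonneg fun t _ => hw _
  calc _ ≤ ∑ x : Fin n → X, Real.exp (-(l * s)) * ((∏ t, w (x t)) * Real.exp (l * f x - l * Ef)) := by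
        apply Finset.sum_le_sum; intro x _
        split_ifs with hx
        · have : 1 ≤ Real.exp (-(l * s)) * Real.exp (l * f x - l * Ef) := by
            rw [← Real.exp_add]; apply Real.one_le_exp
            have := mul_le_mul_of_nonneg_left hx hl0.le
            linarith
          have := mul_le_mul_of_nonneg_left this (hWn x)
          linarith
        · have := hWn x
          positivity
    _ ≤ Real.exp (-(l * s)) * Real.exp (n * ((l * c) ^ 2 / 2)) := by
        rw [← Finset.mul_sum]
        exact mul_le_mul_of_nonneg_left h (Real.exp_pos _).le
    _ = _ := by
        rw [← Real.exp_add]; congr 1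
        rw [hl]; field_simp; ring


/-- Sign of a Boolean. -/
noncomputable def sg (b : Bool) : ℝ := if b then 1 else -1

lemma sg_not (b : Bool) : sg (!b) = - sg b := by cases b <;> simp [sg]

lemma le_sup {I : Type*} [Finite I] (f : I → ℝ) (i : I) : f i ≤ ⨆ i, f i :=
  le_ciSup (Set.finite_range f).bddAbove i

lemma contr_one {I : Type*} [Finite I] [Nonempty I] (c a b : I → ℝ)
    (h : ∀ i j, |b i - b j| ≤ |a i - a j|) :
    (⨆ i, (c i + b i)) + (⨆ i, (c i - b i)) ≤ (⨆ i, (c i + a i)) + (⨆ i, (c i - a i)) := by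
  obtain ⟨i, hi⟩ := exists_eq_ciSup_of_finite (f := fun i => c i + b i)
  obtain ⟨j, hj⟩ := exists_eq_ciSup_of_finite (f := fun i => c i - b i)
  rw [← hi, ← hj]
  have h1 := le_sup (fun i => c i + a i) i
  have h2 := le_sup (fun i => c i + a i) j
  have h3 := le_sup (fun i => c i - a i) i
  have h4 := le_sup (fun i => c i - a i) j
  have h5 := h i j
  have h6 := le_abs_self (b i - b j)
  rcases le_total 0 (a i - a j) with h7 | h7
  · rw [abs_of_nonneg h7] at h5; linarith
  · rw [abs_of_nonpos h7] at h5; linarith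

/-- Ledoux–Talagrand contraction. -/
lemma contr {I : Type*} [Finite I] [Nonempty I] (n : ℕ) : ∀ (c : I → ℝ) (a b : I → Fin n → ℝ)
    (_ : ∀ t i j, |b i t - b j t| ≤ |a i t - a j t|),
    ∑ e : Fin n → Bool, (⨆ i, (c i + ∑ t, sg (e t) * b i t)) ≤
    ∑ e : Fin n → Bool, (⨆ i, (c i + ∑ t, sg (e t) * a i t)) := by
  induction n with
  | zero => intro c a b _; simp
  | succ n ih =>
    intro c a b h
    rw [sum_cons, sum_cons]
    simp only [Fin.sum_univ_succ, Fin.cons_zero, Fin.cons_succ]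
    calc _ ≤ ∑ s : Bool, ∑ e : Fin n → Bool,
              (⨆ i, ((c i + sg s * b i 0) + ∑ t, sg (e t) * a i t.succ)) := by
          apply Finset.sum_le_sum; intro s _
          have := ih (fun i => c i + sg s * b i 0) (fun i t => a i t.succ) (fun i t => b i t.succ)
            (fun t i j => h t.succ i j)
          simpa only [add_assoc] using this
      _ = ∑ e : Fin n → Bool, ∑ s : Bool,
              (⨆ i, ((c i + ∑ t, sg (e t) * a i t.succ) + sg s * b i 0)) := by
          rw [Finset.sum_comm]
          simp only [add_right_comm]
      _ ≤ ∑ e : Fin n → Bool, ∑ s : Bool,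
              (⨆ i, ((c i + ∑ t, sg (e t) * a i t.succ) + sg s * a i 0)) := by
          apply Finset.sum_le_sum; intro e _
          have := contr_one (fun i => c i + ∑ t, sg (e t) * a i t.succ) (fun i => a i 0)
            (fun i => b i 0) (h 0)
          simpa [sg, sub_eq_add_neg] using this
      _ = _ := by
          rw [Finset.sum_comm]
          simp only [add_assoc, add_comm, add_left_comm]

/-- Symmetrization. -/
lemma symm_ineq {X I : Type*} [Fintype X] [Finite I] [Nonempty I] (w : X → ℝ) (hw : ∀ x, 0 ≤ w x)
    (h1 : ∑ x, w x = 1) (n : ℕ) (g : I → X → ℝ) :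
    ∑ x : Fin n → X, (∏ t, w (x t)) * (⨆ i, ∑ t, ((∑ a, w a * g i a) - g i (x t))) ≤
      2 * ((∑ e : Fin n → Bool, ∑ x : Fin n → X, (∏ t, w (x t)) * (⨆ i, ∑ t, sg (e t) * g i (x t)))
        / 2 ^ n) := by
  set W : (Fin n → X) → ℝ := fun x => ∏ t, w (x t) with hW
  have hW0 : ∀ x, 0 ≤ W x := fun x => Finset.prod_nonneg fun t _ => hw _
  have hW1 : ∑ x, W x = 1 := sum_W w h1 n
  have hmarg : ∀ (φ : X → ℝ) (t : Fin n), ∑ x, W x * φ (x t) = ∑ a, w a * φ a := by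
    clear hW1 hW0
    intro φ t
    classical
    have h := Finset.prod_univ_sum (fun _ : Fin n => (Finset.univ : Finset X))
      (fun s a => if s = t then w a * φ a else w a)
    rw [Fintype.piFinset_univ] at h
    have hl : (∏ s : Fin n, ∑ a : X, (if s = t then w a * φ a else w a)) = ∑ a, w a * φ a := by
      rw [Finset.prod_eq_single t]
      · simp
      · intro s _ hs; simp [hs, h1]
      · simp
    rw [hl] at h
    rw [h]
    apply Finset.sum_congr rfl; intro x _
    have : ∀ s, (if s = t then w (x s) * φ (x s) else w (x s)) =
        w (x s) * (if s = t then φ (x s) else 1) := by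
      intro s; split_ifs <;> simp
    simp only [this, Finset.prod_mul_distrib, hW]
    simp
  set R : (Fin n → Bool) → ℝ := fun e => ∑ x, W x * (⨆ i, ∑ t, sg (e t) * g i (x t)) with hR
  set Q := ∑ x, W x * (⨆ i, ∑ t, ((∑ a, w a * g i a) - g i (x t))) with hQ
  have step1 : Q ≤ ∑ x, ∑ x', W x * W x' * (⨆ i, ∑ t, (g i (x' t) - g i (x t))) := by
    apply Finset.sum_le_sum; intro x _
    simp only [mul_assoc, ← Finset.mul_sum]
    apply mul_le_mul_of_nonneg_left _ (hW0 x)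
    apply ciSup_le; intro i
    calc ∑ t, ((∑ a, w a * g i a) - g i (x t)) = ∑ x', W x' * (∑ t, (g i (x' t) - g i (x t))) := by
          simp only [Finset.mul_sum]
          rw [Finset.sum_comm]
          apply Finset.sum_congr rfl; intro t _
          simp only [mul_sub, Finset.sum_sub_distrib, ← Finset.sum_mul, hW1, one_mul, hmarg (g i) t]
      _ ≤ _ := Finset.sum_le_sum fun x' _ =>
          mul_le_mul_of_nonneg_left (le_sup (fun i => ∑ t, (g i (x' t) - g i (x t))) i) (hW0 x')
  have step2 : ∀ e : Fin n → Bool, ∑ x, ∑ x', W x * W x' * (⨆ i, ∑ t, (g i (x' t) - g i (x t))) =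
      ∑ x, ∑ x', W x * W x' * (⨆ i, ∑ t, sg (e t) * (g i (x' t) - g i (x t))) := by
    intro e
    rw [← Fintype.sum_prod_type', ← Fintype.sum_prod_type']
    let T : (Fin n → X) × (Fin n → X) → (Fin n → X) × (Fin n → X) := fun p =>
      (fun t => if e t then p.1 t else p.2 t, fun t => if e t then p.2 t else p.1 t)
    have hT : Function.Involutive T := by
      intro p
      ext t
      · simp only [T]; split_ifs <;> rfl
      · simp only [T]; split_ifs <;> rfl
    rw [← Equiv.sum_comp (hT.toPerm T)]
    apply Finset.sum_congr rfl; rintro ⟨x, x'⟩ _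
    simp only [Function.Involutive.coe_toPerm]
    have hw2 : W (T (x, x')).1 * W (T (x, x')).2 = W x * W x' := by
      simp only [hW, ← Finset.prod_mul_distrib, T]
      apply Finset.prod_congr rfl; intro t _
      split_ifs
      · rfl
      · ring
    rw [hw2]
    congr 1
    congr 1; funext i
    apply Finset.sum_congr rfl; intro t _
    simp only [T, sg]
    split_ifs <;> ring
  have step3 : ∀ e : Fin n → Bool, Q ≤ R e + R (fun t => !(e t)) := by
    intro e
    refine step1.trans ?_
    rw [step2 e]
    calc _ ≤ ∑ x, ∑ x', (W x' * (W x * (⨆ i, ∑ t, sg (!(e t)) * g i (x t))) +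
              W x * (W x' * (⨆ i, ∑ t, sg (e t) * g i (x' t)))) := by
          apply Finset.sum_le_sum; intro x _
          apply Finset.sum_le_sum; intro x' _
          have : (⨆ i, ∑ t, sg (e t) * (g i (x' t) - g i (x t))) ≤
              (⨆ i, ∑ t, sg (!(e t)) * g i (x t)) + (⨆ i, ∑ t, sg (e t) * g i (x' t)) := by
            apply ciSup_le; intro i
            have ha := le_sup (fun i => ∑ t, sg (!(e t)) * g i (x t)) i
            have hb := le_sup (fun i => ∑ t, sg (e t) * g i (x' t)) i
            refine le_trans (le_of_eq ?_) (add_le_add ha hb)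
            simp only [← Finset.sum_add_distrib]
            apply Finset.sum_congr rfl; intro t _
            rw [sg_not]; ring
          have := mul_le_mul_of_nonneg_left this (mul_nonneg (hW0 x) (hW0 x'))
          linarith
      _ = _ := by
          simp only [Finset.sum_add_distrib, ← Finset.mul_sum, ← Finset.sum_mul, hW1, one_mul]
          rw [add_comm]
  have step4 : ∑ _e : Fin n → Bool, Q ≤ ∑ e, (R e + R (fun t => !(e t))) :=
    Finset.sum_le_sum fun e _ => step3 e
  have step5 : ∑ e : Fin n → Bool, R (fun t => !(e t)) = ∑ e, R e := by
    have hi : Function.Involutive (fun (e : Fin n → Bool) t => !(e t)) := by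
      intro e; funext t; simp
    exact Equiv.sum_comp (hi.toPerm _) R
  rw [Finset.sum_add_distrib, step5] at step4
  simp only [Finset.sum_const, Finset.card_univ, Fintype.card_fun, Fintype.card_bool,
    Fintype.card_fin, nsmul_eq_mul, Nat.cast_pow, Nat.cast_ofNat] at step4
  rw [← mul_div_assoc, le_div_iff₀ (by positivity)]
  linarith

/-- Massart-type bound for averages over signs. -/
lemma massart {I : Type*} [Fintype I] [Nonempty I] (n : ℕ) (z : I → Fin n → ℝ)
    (hz : ∀ i t, |z i t| ≤ 1) (q l : ℝ) (hl : 0 < l) (hq : (Fintype.card I : ℝ) ≤ Real.exp q) :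
    (∑ e : Fin n → Bool, (⨆ i, ∑ t, sg (e t) * z i t)) / 2 ^ n ≤ q / l + n * l / 2 := by
  have hone : ∀ i, ∑ e : Fin n → Bool, Real.exp (l * ∑ t, sg (e t) * z i t) ≤
      2 ^ n * Real.exp (n * l ^ 2 / 2) := by
    intro i
    have h := Finset.prod_univ_sum (fun _ : Fin n => (Finset.univ : Finset Bool))
      (fun t b => Real.exp (l * (sg b * z i t)))
    rw [Fintype.piFinset_univ] at h
    simp only [Finset.mul_sum, Real.exp_sum]
    rw [← h]
    calc _ ≤ ∏ _t : Fin n, (2 * Real.exp (l ^ 2 / 2)) := by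
          apply Finset.prod_le_prod
          · intro t _; positivity
          · intro t _
            simp only [Fintype.sum_bool, sg, if_true]
            have h1 := Real.cosh_le_exp_half_sq (l * z i t)
            have h2 : Real.exp ((l * z i t) ^ 2 / 2) ≤ Real.exp (l ^ 2 / 2) := by
              apply Real.exp_le_exp.2
              have := (sq_le_one_iff_abs_le_one (z i t)).2 (hz i t)
              nlinarith [sq_nonneg l]
            rw [Real.cosh_eq] at h1
            simp only [Bool.false_eq_true, if_false, one_mul, neg_mul, mul_neg]
            linarith
      _ = _ := by
          rw [Finset.prod_const, Finset.card_univ, Fintype.card_fin, mul_pow, ← Real.exp_nat_mul]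
          congr 2; ring
  set Q := q + n * l ^ 2 / 2 with hQ
  have hpt : ∀ e : Fin n → Bool, l * (⨆ i, ∑ t, sg (e t) * z i t) ≤
      (Q - 1) + Real.exp (-Q) * ∑ i, Real.exp (l * ∑ t, sg (e t) * z i t) := by
    intro e
    obtain ⟨i, hi⟩ := exists_eq_ciSup_of_finite (f := fun i => ∑ t, sg (e t) * z i t)
    rw [← hi]
    have h1 := Real.add_one_le_exp (l * (∑ t, sg (e t) * z i t) - Q)
    have h2 : Real.exp (l * ∑ t, sg (e t) * z i t) ≤ ∑ i, Real.exp (l * ∑ t, sg (e t) * z i t) :=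
      Finset.single_le_sum (f := fun i => Real.exp (l * ∑ t, sg (e t) * z i t))
        (fun i _ => (Real.exp_pos _).le) (Finset.mem_univ i)
    have h3 := mul_le_mul_of_nonneg_left h2 (Real.exp_pos (-Q)).le
    rw [← Real.exp_add] at h3
    have : -Q + l * ∑ t, sg (e t) * z i t = l * (∑ t, sg (e t) * z i t) - Q := by ring
    rw [this] at h3
    linarith
  have hsum := Finset.sum_le_sum (s := Finset.univ) fun e (_ : e ∈ Finset.univ) => hpt e
  rw [← Finset.mul_sum, Finset.sum_add_distrib, ← Finset.mul_sum, Finset.sum_comm] at hsum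
  have h2 : ∑ i, ∑ e : Fin n → Bool, Real.exp (l * ∑ t, sg (e t) * z i t) ≤
      2 ^ n * Real.exp Q := by
    calc _ ≤ ∑ _i : I, 2 ^ n * Real.exp (n * l ^ 2 / 2) := Finset.sum_le_sum fun i _ => hone i
      _ = (Fintype.card I : ℝ) * (2 ^ n * Real.exp (n * l ^ 2 / 2)) := by
          rw [Finset.sum_const, Finset.card_univ, nsmul_eq_mul]
      _ ≤ Real.exp q * (2 ^ n * Real.exp (n * l ^ 2 / 2)) :=
          mul_le_mul_of_nonneg_right hq (by positivity)
      _ = _ := by rw [hQ, Real.exp_add]; ring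
  have h3 := mul_le_mul_of_nonneg_left h2 (Real.exp_pos (-Q)).le
  have h4 : Real.exp (-Q) * (2 ^ n * Real.exp Q) = 2 ^ n := by
    rw [Real.exp_neg]; field_simp
  rw [h4] at h3
  simp only [Finset.sum_const, Finset.card_univ, Fintype.card_fun, Fintype.card_bool,
    Fintype.card_fin, nsmul_eq_mul, Nat.cast_pow, Nat.cast_ofNat] at hsum
  rw [div_le_iff₀ (by positivity)]
  have h5 : l * (∑ e : Fin n → Bool, (⨆ i, ∑ t, sg (e t) * z i t)) ≤ 2 ^ n * Q := by linarith
  have h6 : (q / l + n * l / 2) * 2 ^ n = 2 ^ n * Q / l := by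
    rw [hQ]; field_simp
  rw [h6, le_div_iff₀ hl]
  linarith

lemma rad_mul {k : ℕ} (x y : Fin k → ℝ) :
    ∑ e : Fin k → Bool, (∑ l, sg (e l) * x l) * (∑ l, sg (e l) * y l) = 2 ^ k * ∑ l, x l * y l := by
  induction k with
  | zero => simp
  | succ k ih =>
    rw [sum_cons]
    simp only [Fin.sum_univ_succ, Fin.cons_zero, Fin.cons_succ]
    rw [Finset.sum_comm]
    have h := ih (fun l => x l.succ) (fun l => y l.succ)
    have : ∀ e : Fin k → Bool, ∑ s : Bool, (sg s * x 0 + ∑ l : Fin k, sg (e l) * x l.succ) *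
        (sg s * y 0 + ∑ l : Fin k, sg (e l) * y l.succ) = 2 * (x 0 * y 0) +
          2 * ((∑ l : Fin k, sg (e l) * x l.succ) * (∑ l : Fin k, sg (e l) * y l.succ)) := by
      intro e
      simp only [Fintype.sum_bool, sg, if_true, Bool.false_eq_true, if_false]
      ring
    simp only [this, Finset.sum_add_distrib, ← Finset.mul_sum, h]
    simp only [Finset.sum_const, Finset.card_univ, Fintype.card_fun, Fintype.card_bool,
      Fintype.card_fin, nsmul_eq_mul, Nat.cast_pow, Nat.cast_ofNat]
    ring

lemma rad_four {k : ℕ} (x : Fin k → ℝ) :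
    ∑ e : Fin k → Bool, (∑ l, sg (e l) * x l) ^ 4 ≤ 2 ^ k * (3 * (∑ l, x l ^ 2) ^ 2) := by
  induction k with
  | zero => simp
  | succ k ih =>
    rw [sum_cons]
    simp only [Fin.sum_univ_succ, Fin.cons_zero, Fin.cons_succ]
    rw [Finset.sum_comm]
    have h := ih (fun l => x l.succ)
    have h2 := rad_mul (fun l => x l.succ) (fun l => x l.succ)
    have : ∀ e : Fin k → Bool, ∑ s : Bool, (sg s * x 0 + ∑ l : Fin k, sg (e l) * x l.succ) ^ 4
         = 2 * x 0 ^ 4 + (12 * x 0 ^ 2) *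
          ((∑ l : Fin k, sg (e l) * x l.succ) * (∑ l : Fin k, sg (e l) * x l.succ)) +
          2 * (∑ l : Fin k, sg (e l) * x l.succ) ^ 4 := by
      intro e
      simp only [Fintype.sum_bool, sg, if_true, Bool.false_eq_true, if_false]
      ring
    simp only [this, Finset.sum_add_distrib, ← Finset.mul_sum, h2]
    simp only [Finset.sum_const, Finset.card_univ, Fintype.card_fun, Fintype.card_bool,
      Fintype.card_fin, nsmul_eq_mul, Nat.cast_pow, Nat.cast_ofNat]
    have h3 : ∑ l : Fin k, x l.succ * x l.succ = ∑ l : Fin k, x l.succ ^ 2 := by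
      simp only [sq]
    rw [h3]
    have h4 : 0 ≤ (2:ℝ) ^ k * x 0 ^ 4 := by positivity
    rw [pow_succ (2:ℝ) k]
    nlinarith

/-- Truncation at level 2. -/
noncomputable def tr (x : ℝ) : ℝ := max (-2) (min x 2)

lemma tr_bd (x : ℝ) : |tr x| ≤ 2 := by
  rw [abs_le]; unfold tr
  exact ⟨le_max_left _ _, max_le (by norm_num) (min_le_right _ _)⟩

lemma tr_sq (x : ℝ) : tr x ^ 2 ≤ x ^ 2 := by
  unfold tr
  rcases le_total x 2 with h | h
  · rw [min_eq_left h]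
    rcases le_total (-2) x with h' | h'
    · rw [max_eq_right h']
    · rw [max_eq_left h']; nlinarith
  · rw [min_eq_right h, max_eq_right (by norm_num)]; nlinarith

lemma tr_diff (x : ℝ) : (x - tr x) ^ 2 ≤ x ^ 4 / 64 := by
  have key : |x - tr x| ≤ x ^ 2 / 8 := by
    unfold tr
    rw [abs_le]
    rcases le_total x 2 with h | h
    · rw [min_eq_left h]
      rcases le_total (-2) x with h' | h'
      · rw [max_eq_right h']; constructor <;> nlinarith
      · rw [max_eq_left h']; constructor <;> nlinarith [sq_nonneg (x + 4)]
    · rw [min_eq_right h, max_eq_right (by norm_num)]; constructor <;> nlinarith [sq_nonneg (x - 4)]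
  calc (x - tr x) ^ 2 = |x - tr x| ^ 2 := (sq_abs _).symm
    _ ≤ (x ^ 2 / 8) ^ 2 := pow_le_pow_left₀ (abs_nonneg _) key 2
    _ = _ := by ring

section groth
variable {m p : ℕ} (A : Fin m → Fin p → ℝ) (B : ℝ)

lemma cube_bound (hB : ∀ (s : Fin m → Bool) (t : Fin p → Bool),
      ∑ i, ∑ j, A i j * (sg (s i) * sg (t j)) ≤ B)
    (a : Fin m → ℝ) (b : Fin p → ℝ) (ha : ∀ i, |a i| ≤ 2) (hb : ∀ j, |b j| ≤ 2) :
    ∑ i, ∑ j, A i j * (a i * b j) ≤ 4 * B := by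
  have hsg : ∀ x : ℝ, ∃ s : Bool, |x| = sg s * x := by
    intro x
    rcases le_total 0 x with h | h
    · exact ⟨true, by simp [sg, abs_of_nonneg h]⟩
    · exact ⟨false, by simp [sg, abs_of_nonpos h]⟩
  choose σ hσ using hsg
  have hle : ∀ x y : ℝ, |x| ≤ 2 → x * y ≤ 2 * (sg (σ y) * y) := by
    intro x y hx
    rw [← hσ y]
    calc x * y ≤ |x * y| := le_abs_self _
      _ = |x| * |y| := abs_mul _ _
      _ ≤ _ := mul_le_mul_of_nonneg_right hx (abs_nonneg _)
  set s : Fin m → Bool := fun i => σ (∑ j, A i j * b j) with hs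
  set t : Fin p → Bool := fun j => σ (∑ i, A i j * sg (s i)) with ht
  calc ∑ i, ∑ j, A i j * (a i * b j) = ∑ i, a i * ∑ j, A i j * b j := by
        simp only [Finset.mul_sum]
        apply Finset.sum_congr rfl; intro i _
        apply Finset.sum_congr rfl; intro j _
        ring
    _ ≤ ∑ i, 2 * (sg (s i) * ∑ j, A i j * b j) :=
        Finset.sum_le_sum fun i _ => hle _ _ (ha i)
    _ = 2 * ∑ j, b j * ∑ i, A i j * sg (s i) := by
        simp only [Finset.mul_sum]
        rw [Finset.sum_comm]
        apply Finset.sum_congr rfl; intro i _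
        apply Finset.sum_congr rfl; intro j _
        ring
    _ ≤ 2 * ∑ j, 2 * (sg (t j) * ∑ i, A i j * sg (s i)) := by
        apply mul_le_mul_of_nonneg_left _ (by norm_num)
        exact Finset.sum_le_sum fun j _ => hle _ _ (hb j)
    _ = 4 * ∑ i, ∑ j, A i j * (sg (s i) * sg (t j)) := by
        simp only [Finset.mul_sum]
        rw [Finset.sum_comm]
        apply Finset.sum_congr rfl; intro i _
        apply Finset.sum_congr rfl; intro j _
        ring
    _ ≤ _ := mul_le_mul_of_nonneg_left (hB s t) (by norm_num)

/-- Values of the Hilbert-space relaxation. -/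
def GS : Set ℝ := { c | ∃ (k : ℕ) (u : Fin m → Fin k → ℝ) (v : Fin p → Fin k → ℝ),
    (∀ i, ∑ l, u i l ^ 2 ≤ 1) ∧ (∀ j, ∑ l, v j l ^ 2 ≤ 1) ∧
    c = ∑ i, ∑ j, A i j * ∑ l, u i l * v j l }

lemma GS_bdd : BddAbove (GS A) := by
  refine ⟨∑ i, ∑ j, |A i j|, ?_⟩
  rintro c ⟨k, u, v, hu, hv, rfl⟩
  apply Finset.sum_le_sum; intro i _
  apply Finset.sum_le_sum; intro j _
  have : |∑ l, u i l * v j l| ≤ 1 := by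
    rw [← sq_le_one_iff_abs_le_one]
    calc _ ≤ (∑ l, u i l ^ 2) * (∑ l, v j l ^ 2) := Finset.sum_mul_sq_le_sq_mul_sq _ _ _
      _ ≤ 1 * 1 := mul_le_mul (hu i) (hv j) (Finset.sum_nonneg fun _ _ => sq_nonneg _) (by norm_num)
      _ = 1 := by norm_num
  calc _ ≤ |A i j * ∑ l, u i l * v j l| := le_abs_self _
    _ = |A i j| * |∑ l, u i l * v j l| := abs_mul _ _
    _ ≤ |A i j| * 1 := mul_le_mul_of_nonneg_left this (abs_nonneg _)
    _ = _ := mul_one _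

lemma GS_nonempty : (GS A).Nonempty := ⟨_, 0, fun _ _ => 0, fun _ _ => 0, by simp, by simp, rfl⟩

lemma hilb {Ω : Type*} [Fintype Ω] (N a b : ℝ) (hN : 0 < N) (ha : 0 < a) (hb : 0 < b)
    (f : Fin m → Ω → ℝ) (h : Fin p → Ω → ℝ)
    (hf : ∀ i, ∑ ω, f i ω ^ 2 ≤ N * a ^ 2) (hh : ∀ j, ∑ ω, h j ω ^ 2 ≤ N * b ^ 2) :
    ∑ i, ∑ j, A i j * ∑ ω, f i ω * h j ω ≤ N * a * b * sSup (GS A) := by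
  set r := Real.sqrt N with hr
  have hr0 : 0 < r := Real.sqrt_pos.2 hN
  have hr2 : r ^ 2 = N := Real.sq_sqrt hN.le
  let E := (Fintype.equivFin Ω).symm
  have hmem : (∑ i, ∑ j, A i j * ∑ l, (f i (E l) / (r * a)) * (h j (E l) / (r * b))) ∈ GS A := by
    refine ⟨Fintype.card Ω, fun i l => f i (E l) / (r * a), fun j l => h j (E l) / (r * b),
      ?_, ?_, rfl⟩
    · intro i
      have := Equiv.sum_comp E (fun ω => (f i ω / (r * a)) ^ 2)
      rw [this]
      simp only [div_pow, ← Finset.sum_div]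
      rw [div_le_one (by positivity), mul_pow, hr2]
      exact hf i
    · intro i
      have := Equiv.sum_comp E (fun ω => (h i ω / (r * b)) ^ 2)
      rw [this]
      simp only [div_pow, ← Finset.sum_div]
      rw [div_le_one (by positivity), mul_pow, hr2]
      exact hh i
  have hle := le_csSup (GS_bdd A) hmem
  have heq : ∑ i, ∑ j, A i j * ∑ ω, f i ω * h j ω = N * a * b *
      (∑ i, ∑ j, A i j * ∑ l, (f i (E l) / (r * a)) * (h j (E l) / (r * b))) := by
    simp only [Finset.mul_sum]
    apply Finset.sum_congr rfl; intro i _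
    apply Finset.sum_congr rfl; intro j _
    rw [← Equiv.sum_comp E]
    apply Finset.sum_congr rfl; intro l _
    rw [← hr2]
    field_simp
  rw [heq]
  exact mul_le_mul_of_nonneg_left hle (by positivity)

/-- Grothendieck's inequality with constant `8`. -/
lemma groth (hB : ∀ (s : Fin m → Bool) (t : Fin p → Bool),
      ∑ i, ∑ j, A i j * (sg (s i) * sg (t j)) ≤ B) : sSup (GS A) ≤ 8 * B := by
  suffices h : sSup (GS A) ≤ 4 * B + sSup (GS A) / 2 by linarith
  apply csSup_le (GS_nonempty A)
  rintro c ⟨k, u, v, hu, hv, rfl⟩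
  set g := sSup (GS A) with hg
  let U : Fin m → (Fin k → Bool) → ℝ := fun i e => ∑ l, sg (e l) * u i l
  let V : Fin p → (Fin k → Bool) → ℝ := fun j e => ∑ l, sg (e l) * v j l
  have sq1 : ∀ x : Fin k → ℝ, (∑ l, x l ^ 2 ≤ 1) →
      ∑ e : Fin k → Bool, (∑ l, sg (e l) * x l) ^ 2 ≤ 2 ^ k * 1 ^ 2 := by
    intro x hx
    have := rad_mul x x
    simp only [← sq] at this
    rw [this]
    have : (0:ℝ) < 2 ^ k := by positivity
    nlinarith
  have sq2 : ∀ x : Fin k → ℝ, (∑ l, x l ^ 2 ≤ 1) →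
      ∑ e : Fin k → Bool, (tr (∑ l, sg (e l) * x l)) ^ 2 ≤ 2 ^ k * 1 ^ 2 := by
    intro x hx
    exact (Finset.sum_le_sum fun e _ => tr_sq _).trans (sq1 x hx)
  have sq3 : ∀ x : Fin k → ℝ, (∑ l, x l ^ 2 ≤ 1) →
      ∑ e : Fin k → Bool, ((∑ l, sg (e l) * x l) - tr (∑ l, sg (e l) * x l)) ^ 2
        ≤ 2 ^ k * (1 / 4) ^ 2 := by
    intro x hx
    refine (Finset.sum_le_sum fun e _ => tr_diff _).trans ?_
    rw [← Finset.sum_div]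
    have h4 := rad_four x
    have h5 : (∑ l, x l ^ 2) ^ 2 ≤ 1 := pow_le_one₀ (Finset.sum_nonneg fun _ _ => sq_nonneg _) hx
    have : (0:ℝ) < 2 ^ k := by positivity
    nlinarith
  have h2k : (0:ℝ) < 2 ^ k := by positivity
  have b2 := hilb A (2 ^ k) 1 (1/4) h2k (by norm_num) (by norm_num)
    (fun i e => tr (U i e)) (fun j e => V j e - tr (V j e)) (fun i => sq2 _ (hu i))
    (fun j => sq3 _ (hv j))
  have b3 := hilb A (2 ^ k) (1/4) 1 h2k (by norm_num) (by norm_num)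
    (fun i e => U i e - tr (U i e)) (fun j e => V j e) (fun i => sq3 _ (hu i))
    (fun j => sq1 _ (hv j))
  have b1 : ∑ i, ∑ j, A i j * ∑ e, tr (U i e) * tr (V j e) ≤ 2 ^ k * (4 * B) := by
    calc _ = ∑ e : Fin k → Bool, ∑ i, ∑ j, A i j * (tr (U i e) * tr (V j e)) := by
          simp only [Finset.mul_sum]
          rw [Finset.sum_comm]
          rw [Finset.sum_comm]
          conv_rhs => rw [Finset.sum_comm]
          apply Finset.sum_congr rfl; intro i _
          rw [Finset.sum_comm]
      _ ≤ ∑ e : Fin k → Bool, 4 * B := Finset.sum_le_sum fun e _ =>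
          cube_bound A B hB _ _ (fun i => tr_bd _) (fun j => tr_bd _)
      _ = _ := by
          simp only [Finset.sum_const, Finset.card_univ, Fintype.card_fun, Fintype.card_bool,
            Fintype.card_fin, nsmul_eq_mul, Nat.cast_pow, Nat.cast_ofNat]
  have htot : 2 ^ k * (∑ i, ∑ j, A i j * ∑ l, u i l * v j l) =
      (∑ i, ∑ j, A i j * ∑ e, tr (U i e) * tr (V j e)) +
      (∑ i, ∑ j, A i j * ∑ e, tr (U i e) * (V j e - tr (V j e))) +
      (∑ i, ∑ j, A i j * ∑ e, (U i e - tr (U i e)) * V j e) := by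
    simp only [← Finset.sum_add_distrib, ← mul_add]
    rw [Finset.mul_sum]
    apply Finset.sum_congr rfl; intro i _
    rw [Finset.mul_sum]
    apply Finset.sum_congr rfl; intro j _
    rw [mul_left_comm, ← rad_mul (u i) (v j)]
    congr 1
    apply Finset.sum_congr rfl; intro e _
    simp only [U, V]
    ring
  have : 2 ^ k * (∑ i, ∑ j, A i j * ∑ l, u i l * v j l) ≤ 2 ^ k * (4 * B + g / 2) := by
    rw [htot]; linarith
  exact le_of_mul_le_mul_left this h2k

lemma rowMax_nonneg {n k : ℕ} (U : Matrix (Fin n) (Fin k) ℝ) : 0 ≤ rowMaxNorm U :=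
  Real.iSup_nonneg fun _ => Real.sqrt_nonneg _

lemma rowMax_row {n k : ℕ} (U : Matrix (Fin n) (Fin k) ℝ) (i : Fin n) :
    ∑ j, U i j ^ 2 ≤ rowMaxNorm U ^ 2 := by
  have h : Real.sqrt (∑ j, U i j ^ 2) ≤ rowMaxNorm U :=
    le_ciSup (f := fun i => Real.sqrt (∑ j, (U i j) ^ 2)) (Set.finite_range _).bddAbove i
  exact (Real.sqrt_le_left (rowMax_nonneg U)).1 h

lemma maxNorm_bound (hp : 0 < p) (hB : ∀ (s : Fin m → Bool) (t : Fin p → Bool),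
      ∑ i, ∑ j, A i j * (sg (s i) * sg (t j)) ≤ B) (M : Matrix (Fin m) (Fin p) ℝ) (R : ℝ)
      (hM : maxNorm M ≤ R) : ∑ i, ∑ j, A i j * M i j ≤ 8 * R * B := by
  have hB0 : 0 ≤ B := by
    have h1 := hB (fun _ => true) (fun _ => true)
    have h2 := hB (fun _ => true) (fun _ => false)
    simp only [sg, if_true, Bool.false_eq_true, if_false, mul_one, one_mul, mul_neg,
      Finset.sum_neg_distrib] at h1 h2
    linarith
  apply le_of_forall_pos_le_add
  intro ε hε
  set η := ε / (8 * B + 1) with hη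
  have hη0 : 0 < η := by positivity
  have hne : ({ c : ℝ | ∃ (k : ℕ) (U : Matrix (Fin m) (Fin k) ℝ) (V : Matrix (Fin p) (Fin k) ℝ),
    0 < k ∧ M = U * Vᵀ ∧ c = rowMaxNorm U * rowMaxNorm V }).Nonempty :=
    ⟨_, p, M, 1, hp, by simp, rfl⟩
  obtain ⟨c, ⟨k, U, V, hk, hMU, rfl⟩, hc⟩ := exists_lt_of_csInf_lt hne
    (show maxNorm M < R + η by linarith)
  have hval : ∑ i, ∑ j, A i j * M i j = ∑ i, ∑ j, A i j * ∑ l, U i l * V j l := by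
    rw [hMU]; simp [Matrix.mul_apply]
  have hmain : ∑ i, ∑ j, A i j * M i j ≤ 8 * (rowMaxNorm U * rowMaxNorm V) * B := by
    rw [hval]
    rcases (rowMax_nonneg U).eq_or_lt with h0 | hU
    · have : ∀ i l, U i l = 0 := by
        intro i l
        have h := rowMax_row U i
        rw [← h0] at h
        have h' := Finset.single_le_sum (f := fun j => U i j ^ 2) (fun j _ => sq_nonneg _)
          (Finset.mem_univ l)
        exact pow_eq_zero_iff (two_ne_zero) |>.1 (le_antisymm (by linarith) (sq_nonneg _))
      simp [this, ← h0]
    rcases (rowMax_nonneg V).eq_or_lt with h0 | hV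
    · have : ∀ i l, V i l = 0 := by
        intro i l
        have h := rowMax_row V i
        rw [← h0] at h
        have h' := Finset.single_le_sum (f := fun j => V i j ^ 2) (fun j _ => sq_nonneg _)
          (Finset.mem_univ l)
        exact pow_eq_zero_iff (two_ne_zero) |>.1 (le_antisymm (by linarith) (sq_nonneg _))
      simp [this, ← h0]
    have h := hilb A 1 _ _ one_pos hU hV (fun i l => U i l) (fun j l => V j l)
      (fun i => by simpa using rowMax_row U i) (fun i => by simpa using rowMax_row V i)
    have hg := mul_le_mul_of_nonneg_left (groth A B hB) (mul_pos hU hV).le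
    linarith
  refine hmain.trans ?_
  have h1 : 8 * (rowMaxNorm U * rowMaxNorm V) * B ≤ 8 * (R + η) * B := by
    apply mul_le_mul_of_nonneg_right _ hB0; linarith
  have h2 : η * (8 * B + 1) = ε := by rw [hη]; field_simp
  linarith

end groth

lemma kl_lower (F : ℝ → ℝ) (α β : ℝ) (hF : Differentiable ℝ F) (h01 : ∀ x, 0 < F x ∧ F x < 1)
    (hd : ∀ x ∈ Set.Icc (-α) α, deriv F x ≠ 0)
    (hβ : ∀ x ∈ Set.Icc (-α) α, F x * (1 - F x) / (deriv F x) ^ 2 ≤ β)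
    (a b : ℝ) (ha : a ∈ Set.Icc (-α) α) (hb : b ∈ Set.Icc (-α) α) :
    (b - a) ^ 2 ≤ Real.pi ^ 2 * β *
      (F a * (Real.log (1 / F b) - Real.log (1 / F a)) +
        (1 - F a) * (Real.log (1 / (1 - F b)) - Real.log (1 / (1 - F a)))) := by
  have hpos : ∀ x ∈ Set.Icc (-α) α, 0 < F x * (1 - F x) / (deriv F x) ^ 2 := fun x hx =>
    div_pos (mul_pos (h01 x).1 (by linarith [(h01 x).2])) (by have := hd x hx; positivity)
  have hβ0 : 0 < β := (hpos a ha).trans_le (hβ a ha)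
  set φ : ℝ → ℝ := fun x => Real.arcsin (Real.sqrt (F x)) with hφ
  have hs1 : ∀ x, 0 < Real.sqrt (F x) := fun x => Real.sqrt_pos.2 (h01 x).1
  have hs2 : ∀ x, Real.sqrt (F x) < 1 := fun x => by
    rw [Real.sqrt_lt' one_pos]; linarith [(h01 x).2]
  have hder : ∀ x, HasDerivAt φ (1 / Real.sqrt (1 - Real.sqrt (F x) ^ 2) *
      (deriv F x / (2 * Real.sqrt (F x)))) x := by
    intro x
    have h1 := (hF x).hasDerivAt.sqrt (h01 x).1.ne'
    exact (Real.hasDerivAt_arcsin (by linarith [hs1 x]) (hs2 x).ne).comp x h1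
  have hdsq : ∀ x, (1 / Real.sqrt (1 - Real.sqrt (F x) ^ 2) *
      (deriv F x / (2 * Real.sqrt (F x)))) ^ 2 = (deriv F x) ^ 2 / (4 * (F x * (1 - F x))) := by
    intro x
    have h0 := h01 x
    rw [Real.sq_sqrt h0.1.le, mul_pow, div_pow, div_pow, mul_pow, Real.sq_sqrt h0.1.le,
      Real.sq_sqrt (by linarith)]
    have : 1 - F x ≠ 0 := by linarith
    have : F x ≠ 0 := h0.1.ne'
    field_simp
    norm_num
  have hlip : (b - a) ^ 2 ≤ 4 * β * (φ b - φ a) ^ 2 := by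
    have mono : ∀ x y, x ∈ Set.Icc (-α) α → y ∈ Set.Icc (-α) α → x < y →
        (y - x) ^ 2 ≤ 4 * β * (φ y - φ x) ^ 2 := by
      intro x y hx hy hxy
      obtain ⟨c, hc, hce⟩ := exists_hasDerivAt_eq_slope φ _ hxy
        (fun z _ => (hder z).continuousAt.continuousWithinAt) (fun z _ => hder z)
      have hcI : c ∈ Set.Icc (-α) α := ⟨hx.1.trans hc.1.le, hc.2.le.trans hy.2⟩
      have h1 := hdsq c
      rw [hce, div_pow] at h1
      have h2 := hβ c hcI
      have h3 : 0 < F c * (1 - F c) := mul_pos (h01 c).1 (by linarith [(h01 c).2])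
      have h4 : 0 < (deriv F c) ^ 2 := by have := hd c hcI; positivity
      rw [div_le_iff₀ h4] at h2
      have h5 : 0 < (y - x) ^ 2 := by have : 0 < y - x := by linarith
                                      positivity
      rw [div_eq_div_iff h5.ne' (by positivity)] at h1
      have h6 : (F c * (1 - F c)) * (y - x) ^ 2 ≤ (F c * (1 - F c)) * (4 * β * (φ y - φ x) ^ 2) := by
        nlinarith
      exact le_of_mul_le_mul_left h6 h3
    rcases lt_trichotomy a b with h | h | h
    · exact mono a b ha hb h
    · simp [h]
    · have := mono b a hb ha h
      nlinarith
  have hcos : Real.cos (φ b - φ a) = Real.sqrt (1 - F b) * Real.sqrt (1 - F a) +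
      Real.sqrt (F b) * Real.sqrt (F a) := by
    rw [Real.cos_sub]
    simp only [hφ]
    rw [Real.cos_arcsin, Real.cos_arcsin, Real.sin_arcsin (by linarith [hs1 b]) (hs2 b).le,
      Real.sin_arcsin (by linarith [hs1 a]) (hs2 a).le, Real.sq_sqrt (h01 a).1.le,
      Real.sq_sqrt (h01 b).1.le]
  have habs : |φ b - φ a| ≤ Real.pi := by
    have h1 := Real.arcsin_le_pi_div_two (Real.sqrt (F b))
    have h2 := Real.arcsin_le_pi_div_two (Real.sqrt (F a))
    have h3 := Real.neg_pi_div_two_le_arcsin (Real.sqrt (F b))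
    have h4 := Real.neg_pi_div_two_le_arcsin (Real.sqrt (F a))
    rw [abs_le]; constructor <;> simp only [hφ] <;> linarith
  have hq := Real.cos_le_one_sub_mul_cos_sq habs
  rw [hcos] at hq
  have hlog : ∀ p q : ℝ, 0 < p → 0 < q →
      2 * p - 2 * (Real.sqrt q * Real.sqrt p) ≤ p * (Real.log (1 / q) - Real.log (1 / p)) := by
    intro p q hp hq
    have h1 := Real.log_le_sub_one_of_pos (x := Real.sqrt q / Real.sqrt p)
      (div_pos (Real.sqrt_pos.2 hq) (Real.sqrt_pos.2 hp))
    rw [Real.log_div (Real.sqrt_pos.2 hq).ne' (Real.sqrt_pos.2 hp).ne', Real.log_sqrt hq.le,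
      Real.log_sqrt hp.le] at h1
    simp only [one_div, Real.log_inv]
    have h2 : p * (Real.sqrt q / Real.sqrt p) = Real.sqrt q * Real.sqrt p := by
      have h3 := (Real.sqrt_pos.2 hp).ne'
      rw [mul_div_assoc', div_eq_iff h3, mul_assoc, Real.mul_self_sqrt hp.le, mul_comm]
    have h3 := mul_le_mul_of_nonneg_left h1 hp.le
    nlinarith
  have hl1 := hlog (F a) (F b) (h01 a).1 (h01 b).1
  have hl2 := hlog (1 - F a) (1 - F b) (by linarith [(h01 a).2]) (by linarith [(h01 b).2])
  set K := F a * (Real.log (1 / F b) - Real.log (1 / F a)) +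
        (1 - F a) * (Real.log (1 / (1 - F b)) - Real.log (1 / (1 - F a))) with hK
  have hKl : 2 * (2 / Real.pi ^ 2 * (φ b - φ a) ^ 2) ≤ K := by linarith
  have hpi : 0 < Real.pi ^ 2 := by have := Real.pi_pos; positivity
  have : 4 * (φ b - φ a) ^ 2 ≤ Real.pi ^ 2 * K := by
    have := mul_le_mul_of_nonneg_left hKl hpi.le
    have e : Real.pi ^ 2 * (2 * (2 / Real.pi ^ 2 * (φ b - φ a) ^ 2)) = 4 * (φ b - φ a) ^ 2 := by
      field_simp; ring
    linarith
  calc _ ≤ _ := hlip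
    _ = β * (4 * (φ b - φ a) ^ 2) := by ring
    _ ≤ β * (Real.pi ^ 2 * K) := mul_le_mul_of_nonneg_left this hβ0.le
    _ = _ := by ring

/-- The loss for one observation. -/
noncomputable def loss (F : ℝ → ℝ) (y : Bool) (x : ℝ) : ℝ :=
  if y then Real.log (1 / F x) else Real.log (1 / (1 - F x))

lemma loss_bd (F : ℝ → ℝ) (α U : ℝ) (h01 : ∀ x, 0 < F x ∧ F x < 1)
    (hU : ∀ x ∈ Set.Icc (-α) α, Real.log (1 / (F x * (1 - F x))) ≤ U) (y : Bool) (x : ℝ)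
    (hx : x ∈ Set.Icc (-α) α) : 0 ≤ loss F y x ∧ loss F y x ≤ U := by
  have h := hU x hx
  have h1 := h01 x
  have h2 : 0 < 1 - F x := by linarith
  rw [one_div, Real.log_inv, Real.log_mul h1.1.ne' h2.ne'] at h
  have l1 := Real.log_neg h1.1 h1.2
  have l2 := Real.log_neg h2 (by linarith)
  unfold loss
  split_ifs <;> rw [one_div, Real.log_inv] <;> constructor <;> linarith

lemma loss_lip (F : ℝ → ℝ) (α L : ℝ) (hF : Differentiable ℝ F) (h01 : ∀ x, 0 < F x ∧ F x < 1)
    (hL : ∀ x ∈ Set.Icc (-α) α, |deriv F x| / (F x * (1 - F x)) ≤ L) (y : Bool) (a b : ℝ)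
    (ha : a ∈ Set.Icc (-α) α) (hb : b ∈ Set.Icc (-α) α) :
    |loss F y a - loss F y b| ≤ L * |a - b| := by
  have hder : ∀ x, HasDerivAt (loss F y)
      (if y then - (deriv F x / F x) else deriv F x / (1 - F x)) x := by
    intro x
    have h2 : 1 - F x ≠ 0 := by linarith [(h01 x).2]
    cases y
    · have h := (((hF x).hasDerivAt.const_sub 1).log h2).neg
      have e : loss F false = -fun y => Real.log (1 - F y) := by
        funext z; simp [loss]
      rw [e]
      simpa [neg_div] using h
    · have h := ((hF x).hasDerivAt.log (h01 x).1.ne').neg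
      have e : loss F true = -fun y => Real.log (F y) := by
        funext z; simp [loss]
      rw [e]
      simpa using h
  have := Convex.norm_image_sub_le_of_norm_hasDerivWithin_le (f := loss F y) (C := L)
    (s := Set.Icc (-α) α) (x := b) (y := a)
    (fun x _ => (hder x).hasDerivWithinAt) (by
      intro x hx
      refine le_trans ?_ (hL x hx)
      have h1 := h01 x
      have h2 : 0 < 1 - F x := by linarith
      have h3 : 0 < F x * (1 - F x) := mul_pos h1.1 h2
      rw [Real.norm_eq_abs]
      split_ifs
      · rw [abs_neg, abs_div, abs_of_pos h1.1]
        apply div_le_div_of_nonneg_left (abs_nonneg _) h3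
        nlinarith
      · rw [abs_div, abs_of_pos h2]
        apply div_le_div_of_nonneg_left (abs_nonneg _) h3
        nlinarith) (convex_Icc _ _) hb ha
  simpa [Real.norm_eq_abs] using this

lemma rad_class {d1 d2 n : ℕ} (hd1 : 0 < d1) (hd2 : 0 < d2) (hn : 0 < n) {I : Type*} [Finite I]
    [Nonempty I] (ix : Fin n → Fin d1 × Fin d2) (M : I → Matrix (Fin d1) (Fin d2) ℝ) (R L : ℝ)
    (hR : 0 ≤ R) (hL : 0 ≤ L)
    (hM : ∀ i, maxNorm (M i) ≤ R) (b : I → Fin n → ℝ)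
    (hb : ∀ t i j, |b i t - b j t| ≤ L * |M i (ix t).1 (ix t).2 - M j (ix t).1 (ix t).2|) :
    ∑ e : Fin n → Bool, (⨆ i, ∑ t, sg (e t) * b i t) ≤
      2 ^ n * (12 * L * R * (n * Real.sqrt ((d1 + d2 : ℝ) / n))) := by
  have hn' : (0:ℝ) < n := by exact_mod_cast hn
  have hd1' : (0:ℝ) < d1 := by exact_mod_cast hd1
  have hd2' : (0:ℝ) < d2 := by exact_mod_cast hd2
  have h1 := contr (I := I) n (fun _ => 0) (fun i t => L * M i (ix t).1 (ix t).2) b (by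
    intro t i j
    rw [← mul_sub, abs_mul, abs_of_nonneg hL]
    exact hb t i j)
  simp only [zero_add] at h1
  refine h1.trans ?_
  let J := (Fin d1 → Bool) × (Fin d2 → Bool)
  let z : J → Fin n → ℝ := fun j t => sg (j.1 (ix t).1) * sg (j.2 (ix t).2)
  set r := Real.sqrt ((d1 + d2 : ℝ) / n) with hr
  have hr0 : 0 < r := Real.sqrt_pos.2 (by positivity)
  have hr2 : r ^ 2 = (d1 + d2 : ℝ) / n := Real.sq_sqrt (by positivity)
  have hmas := massart (I := J) n z (by
    intro j t
    simp only [z, sg]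
    split_ifs <;> norm_num) (d1 + d2 : ℝ) r hr0 (by
      have : (Fintype.card J : ℝ) = 2 ^ (d1 + d2) := by
        simp [J, pow_add]
      rw [this]
      have h2 : (2:ℝ) ≤ Real.exp 1 := by have := Real.add_one_le_exp 1; linarith
      calc (2:ℝ) ^ (d1 + d2) ≤ Real.exp 1 ^ (d1 + d2) := pow_le_pow_left₀ (by norm_num) h2 _
        _ = _ := by rw [← Real.exp_nat_mul]; congr 1; push_cast; ring)
  have hq : (d1 + d2 : ℝ) / r + n * r / 2 = 3 / 2 * (n * r) := by
    have : (d1 + d2 : ℝ) = n * r ^ 2 := by rw [hr2]; field_simp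
    rw [this]; field_simp; ring
  rw [hq, div_le_iff₀ (by positivity)] at hmas
  have hpt : ∀ e : Fin n → Bool, (⨆ i, ∑ t, sg (e t) * (L * M i (ix t).1 (ix t).2)) ≤
      8 * R * L * (⨆ j : J, ∑ t, sg (e t) * z j t) := by
    intro e
    apply ciSup_le; intro i
    let A : Fin d1 → Fin d2 → ℝ := fun k l => ∑ t, if ix t = (k, l) then sg (e t) else 0
    have hA : ∀ Φ : Fin d1 → Fin d2 → ℝ, ∑ k, ∑ l, A k l * Φ k l =
        ∑ t, sg (e t) * Φ (ix t).1 (ix t).2 := by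
      intro Φ
      rw [← Fintype.sum_prod_type' (f := fun k l => A k l * Φ k l)]
      simp only [A, Finset.sum_mul]
      rw [Finset.sum_comm]
      apply Finset.sum_congr rfl; intro t _
      rw [Finset.sum_eq_single (ix t)]
      · simp
      · intro q _ hq
        rw [if_neg (fun h => hq h.symm), zero_mul]
      · simp
    have hmx := maxNorm_bound A (⨆ j : J, ∑ t, sg (e t) * z j t) hd2 (by
      intro s t
      rw [hA (fun k l => sg (s k) * sg (t l))]
      exact le_sup (fun j : J => ∑ t, sg (e t) * z j t) (s, t)) (M i) R (hM i)
    rw [hA (fun k l => M i k l)] at hmx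
    have := mul_le_mul_of_nonneg_left hmx hL
    calc _ = L * ∑ t, sg (e t) * M i (ix t).1 (ix t).2 := by
          rw [Finset.mul_sum]; apply Finset.sum_congr rfl; intros; ring
      _ ≤ _ := this
      _ = _ := by ring
  calc _ ≤ ∑ e : Fin n → Bool, 8 * R * L * (⨆ j : J, ∑ t, sg (e t) * z j t) :=
        Finset.sum_le_sum fun e _ => hpt e
    _ = 8 * R * L * ∑ e : Fin n → Bool, (⨆ j : J, ∑ t, sg (e t) * z j t) := by rw [Finset.mul_sum]
    _ ≤ 8 * R * L * (3 / 2 * (n * r) * 2 ^ n) :=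
        mul_le_mul_of_nonneg_left hmas (by positivity)
    _ = _ := by ring

lemma linf_mem {d1 d2 : ℕ} (M : Matrix (Fin d1) (Fin d2) ℝ) (α : ℝ) (h : linfNorm M ≤ α)
    (k : Fin d1) (l : Fin d2) : M k l ∈ Set.Icc (-α) α := by
  have h1 : |M k l| ≤ ⨆ l, |M k l| := le_sup (fun l => |M k l|) l
  have h2 : (⨆ l, |M k l|) ≤ linfNorm M := le_sup (fun k => ⨆ l, |M k l|) k
  exact abs_le.1 (h1.trans (h2.trans h))

/-- Uniform deviation bound. -/
lemma sup_diff {X I : Type*} [Finite I] [Nonempty I] {n : ℕ} (μ : I → ℝ)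
    (g : I → X → ℝ) (c : ℝ) (hg : ∀ i a b, |g i a - g i b| ≤ c)
    (x y : Fin n → X) (t : Fin n) (h : ∀ s, s ≠ t → x s = y s) :
    |(⨆ i, ∑ t, (μ i - g i (x t))) - (⨆ i, ∑ t, (μ i - g i (y t)))| ≤ c := by
  have key : ∀ x y : Fin n → X, (∀ s, s ≠ t → x s = y s) →
      (⨆ i, ∑ t, (μ i - g i (x t))) ≤ (⨆ i, ∑ t, (μ i - g i (y t))) + c := by
    intro x y h
    apply ciSup_le; intro i
    have h1 := le_sup (fun i => ∑ t, (μ i - g i (y t))) i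
    have h2 : ∑ t, (μ i - g i (x t)) - ∑ t, (μ i - g i (y t)) = g i (y t) - g i (x t) := by
      rw [← Finset.sum_sub_distrib, Finset.sum_eq_single t]
      · ring
      · intro s _ hs; rw [h s hs]; ring
      · simp
    have h3 := (abs_le.1 (hg i (y t) (x t))).2
    linarith
  have h1 := key x y h
  have h2 := key y x (fun s hs => (h s hs).symm)
  rw [abs_le]; constructor <;> linarith

end MNorm

/-- upper bound for the max-norm constrained maximum likelihood estimator of
1-bit matrix completion under a general sampling distribution. There is an absolute
constant `C > 0` such that, under Condition U, any minimizer `M̂` of the negative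
log-likelihood over `K_max(α, R)` satisfies, with probability at least `1 − δ`,
`‖M̂ − M*‖_Π² ≤ C β_α { L_α R √(d/n) + U_α √(log(4/δ)/n) }`. -/
theorem maxNorm_MLE_upper_bound :
    ∃ C : ℝ, 0 < C ∧
      ∀ (d1 d2 n : ℕ) (α R : ℝ) (F : ℝ → ℝ) (π : Fin d1 → Fin d2 → ℝ)
        (Mstar : Matrix (Fin d1) (Fin d2) ℝ) (Lα βα Uα δ : ℝ)
        (Mhat : (Fin n → Fin d1 × Fin d2) → (Fin n → Bool) →
          Matrix (Fin d1) (Fin d2) ℝ),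
        1 ≤ d1 → 1 ≤ d2 → 2 < n → n ≤ d1 * d2 → 0 < α → 0 < R →
        Differentiable ℝ F → (∀ x, 0 < F x ∧ F x < 1) →
        (∀ x ∈ Set.Icc (-α) α, deriv F x ≠ 0) →
        IsLUB ((fun x => |deriv F x| / (F x * (1 - F x))) '' Set.Icc (-α) α) Lα →
        IsLUB ((fun x => F x * (1 - F x) / (deriv F x) ^ 2) '' Set.Icc (-α) α) βα →
        IsLUB ((fun x => Real.log (1 / (F x * (1 - F x)))) '' Set.Icc (-α) α) Uα →
        linfNorm Mstar ≤ α → maxNorm Mstar ≤ R →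
        (∀ k l, 0 ≤ π k l) → (∑ k, ∑ l, π k l = 1) →
        0 < δ →
        (∀ (S : Fin n → Fin d1 × Fin d2) (y : Fin n → Bool),
          (linfNorm (Mhat S y) ≤ α ∧ maxNorm (Mhat S y) ≤ R) ∧
          ∀ M : Matrix (Fin d1) (Fin d2) ℝ, linfNorm M ≤ α → maxNorm M ≤ R →
            negLogLik F S y (Mhat S y) ≤ negLogLik F S y M) →
        1 - δ ≤
          ∑ S : Fin n → Fin d1 × Fin d2, ∑ y : Fin n → Bool,
            Set.indicator
              { p : (Fin n → Fin d1 × Fin d2) × (Fin n → Bool) |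
                ∑ k, ∑ l, π k l * (Mhat p.1 p.2 k l - Mstar k l) ^ 2 ≤
                  C * βα * (Lα * R * Real.sqrt ((d1 + d2 : ℝ) / n) +
                    Uα * Real.sqrt (Real.log (4 / δ) / n)) }
              (fun p => sampleWeight F π Mstar p.1 p.2) (S, y) := by
  refine ⟨240, by norm_num, ?_⟩
  intro d1 d2 n α R F π Mstar Lα βα Uα δ Mhat hd1 hd2 hn _ hα hR hF h01 hd hL hβ hU hMs1 hMs2
    hπ0 hπ1 hδ hMhat
  classical
  have hn0 : 0 < n := by omega
  have hn' : (0:ℝ) < n := by exact_mod_cast hn0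
  have hLb : ∀ x ∈ Set.Icc (-α) α, |deriv F x| / (F x * (1 - F x)) ≤ Lα :=
    fun x hx => hL.1 ⟨x, hx, rfl⟩
  have hβb : ∀ x ∈ Set.Icc (-α) α, F x * (1 - F x) / (deriv F x) ^ 2 ≤ βα :=
    fun x hx => hβ.1 ⟨x, hx, rfl⟩
  have hUb : ∀ x ∈ Set.Icc (-α) α, Real.log (1 / (F x * (1 - F x))) ≤ Uα :=
    fun x hx => hU.1 ⟨x, hx, rfl⟩
  have h0m : (0:ℝ) ∈ Set.Icc (-α) α := ⟨by linarith, hα.le⟩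
  have hF0 := h01 0
  have hFp : 0 < F 0 * (1 - F 0) := mul_pos hF0.1 (by linarith)
  have hL0 : 0 ≤ Lα := le_trans (by positivity) (hLb 0 h0m)
  have hβ0 : 0 ≤ βα := le_trans (by positivity) (hβb 0 h0m)
  have hU0 : 0 < Uα := lt_of_lt_of_le (Real.log_pos (by
    rw [lt_div_iff₀ hFp]; nlinarith)) (hUb 0 h0m)
  -- the one-sample space
  let w : (Fin d1 × Fin d2) × Bool → ℝ := fun x => π x.1.1 x.1.2 *
    (if x.2 then F (Mstar x.1.1 x.1.2) else 1 - F (Mstar x.1.1 x.1.2))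
  have hw : ∀ x, 0 ≤ w x := by
    intro x
    apply mul_nonneg (hπ0 _ _)
    have := h01 (Mstar x.1.1 x.1.2)
    split_ifs <;> linarith
  have hsumw : ∀ G : (Fin d1 × Fin d2) × Bool → ℝ, ∑ x, w x * G x =
      ∑ k, ∑ l, π k l * (F (Mstar k l) * G ((k, l), true) +
        (1 - F (Mstar k l)) * G ((k, l), false)) := by
    intro G
    rw [Fintype.sum_prod_type, Fintype.sum_prod_type]
    apply Finset.sum_congr rfl; intro k _
    apply Finset.sum_congr rfl; intro l _
    simp only [Fintype.sum_bool, w, if_true, Bool.false_eq_true, if_false]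
    ring
  have hw1 : ∑ x, w x = 1 := by
    have := hsumw (fun _ => 1)
    simp only [mul_one, add_sub_cancel] at this
    rw [this, hπ1]
  have hW0 : ∀ x : Fin n → (Fin d1 × Fin d2) × Bool, 0 ≤ ∏ t, w (x t) :=
    fun x => Finset.prod_nonneg fun t _ => hw _
  -- rewrite the sum over samples
  rw [← Fintype.sum_prod_type', ← Equiv.sum_comp (Equiv.arrowProdEquivProdArrow (Fin n)
    (fun _ => Fin d1 × Fin d2) (fun _ => Bool))]
  have hsw : ∀ x : Fin n → (Fin d1 × Fin d2) × Bool, sampleWeight F π Mstar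
      (fun t => (x t).1) (fun t => (x t).2) = ∏ t, w (x t) := fun x => rfl
  rcases le_or_gt 1 δ with hδ1 | hδ1
  · refine le_trans (by linarith : 1 - δ ≤ 0) ?_
    apply Finset.sum_nonneg; intro x _
    apply Set.indicator_nonneg
    intro p _
    exact Finset.prod_nonneg fun t _ => hw ((p.1 t, p.2 t))
  haveI : Nonempty (Fin n → (Fin d1 × Fin d2) × Bool) :=
    ⟨fun _ => ((⟨0, hd1⟩, ⟨0, hd2⟩), true)⟩
  let Mi : (Fin n → (Fin d1 × Fin d2) × Bool) → Matrix (Fin d1) (Fin d2) ℝ :=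
    fun i => Mhat (fun t => (i t).1) (fun t => (i t).2)
  have hMi1 : ∀ i k l, Mi i k l ∈ Set.Icc (-α) α := fun i k l =>
    MNorm.linf_mem _ α (hMhat _ _).1.1 k l
  have hMsI : ∀ k l, Mstar k l ∈ Set.Icc (-α) α := fun k l => MNorm.linf_mem _ α hMs1 k l
  let g : (Fin n → (Fin d1 × Fin d2) × Bool) → (Fin d1 × Fin d2) × Bool → ℝ := fun i x =>
    MNorm.loss F x.2 (Mi i x.1.1 x.1.2) - MNorm.loss F x.2 (Mstar x.1.1 x.1.2)
  have hgd : ∀ i a b, |g i a - g i b| ≤ 2 * Uα := by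
    intro i a b
    have h1 := MNorm.loss_bd F α Uα h01 hUb a.2 _ (hMi1 i a.1.1 a.1.2)
    have h2 := MNorm.loss_bd F α Uα h01 hUb a.2 _ (hMsI a.1.1 a.1.2)
    have h3 := MNorm.loss_bd F α Uα h01 hUb b.2 _ (hMi1 i b.1.1 b.1.2)
    have h4 := MNorm.loss_bd F α Uα h01 hUb b.2 _ (hMsI b.1.1 b.1.2)
    simp only [g]
    rw [abs_le]; constructor <;> linarith
  set r := Real.sqrt ((d1 + d2 : ℝ) / n) with hr
  set f : (Fin n → (Fin d1 × Fin d2) × Bool) → ℝ :=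
    fun x => ⨆ i, ∑ t, ((∑ a, w a * g i a) - g i (x t)) with hf
  set Ef := ∑ x : Fin n → (Fin d1 × Fin d2) × Bool, (∏ t, w (x t)) * f x with hEf
  have hEf_le : Ef ≤ 24 * Lα * R * (n * r) := by
    have h1 := MNorm.symm_ineq w hw hw1 n g
    refine h1.trans ?_
    rw [Finset.sum_comm]
    simp only [← Finset.mul_sum]
    have h2 : ∑ x : Fin n → (Fin d1 × Fin d2) × Bool, (∏ t, w (x t)) *
        (∑ e : Fin n → Bool, (⨆ i, ∑ t, MNorm.sg (e t) * g i (x t))) ≤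
        ∑ x : Fin n → (Fin d1 × Fin d2) × Bool, (∏ t, w (x t)) *
          (2 ^ n * (12 * Lα * R * (n * r))) := by
      apply Finset.sum_le_sum; intro x _
      apply mul_le_mul_of_nonneg_left _ (hW0 x)
      apply MNorm.rad_class hd1 hd2 hn0 (fun t => (x t).1) Mi R Lα hR.le hL0
        (fun i => (hMhat _ _).1.2)
      intro t i j
      simp only [g, sub_sub_sub_cancel_right]
      exact MNorm.loss_lip F α Lα hF h01 hLb _ _ _ (hMi1 i _ _) (hMi1 j _ _)
    rw [← Finset.sum_mul, MNorm.sum_W w hw1 n, one_mul] at h2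
    have h3 := div_le_div_of_nonneg_right h2 (show (0:ℝ) ≤ 2 ^ n by positivity)
    rw [mul_div_cancel_left₀ _ (show (2:ℝ) ^ n ≠ 0 by positivity)] at h3
    linarith
  have hlog : 0 < Real.log (1 / δ) := Real.log_pos (by rw [lt_div_iff₀ hδ]; linarith)
  have hlog4 : Real.log (1 / δ) ≤ Real.log (4 / δ) :=
    Real.log_le_log (by positivity) (by gcongr; norm_num)
  set q := Real.sqrt (Real.log (4 / δ) / n) with hq
  set s := Uα * Real.sqrt (8 * n * Real.log (1 / δ)) with hs
  have hs0 : 0 < s := mul_pos hU0 (Real.sqrt_pos.2 (by positivity))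
  have hs2 : s ^ 2 = Uα ^ 2 * (8 * n * Real.log (1 / δ)) := by
    rw [hs, mul_pow, Real.sq_sqrt (by positivity)]
  have hsq : s ≤ 3 * n * (Uα * q) := by
    have : Real.sqrt (8 * n * Real.log (1 / δ)) ≤ 3 * n * q := by
      apply Real.sqrt_le_iff.2
      refine ⟨by positivity, ?_⟩
      have e : (3 * n * q) ^ 2 = 9 * n * Real.log (4 / δ) := by
        rw [mul_pow, hq, Real.sq_sqrt (div_nonneg (hlog.le.trans hlog4) hn'.le)]
        field_simp; ring
      rw [e]
      nlinarith
    calc s ≤ Uα * (3 * n * q) := mul_le_mul_of_nonneg_left this hU0.le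
      _ = _ := by ring
  have htail := MNorm.mcd_tail w hw hw1 (2 * Uα) (by positivity) n hn0 f
    (fun x y t h => MNorm.sup_diff _ g _ hgd x y t h) s hs0
  have hexp : Real.exp (-(s ^ 2 / (2 * n * (2 * Uα) ^ 2))) = δ := by
    have : s ^ 2 / (2 * n * (2 * Uα) ^ 2) = Real.log (1 / δ) := by
      rw [hs2]; field_simp; ring
    rw [this, one_div, Real.log_inv, neg_neg, Real.exp_log hδ]
  rw [hexp] at htail
  have hgood : ∀ x : Fin n → (Fin d1 × Fin d2) × Bool, f x - Ef < s →
      ∑ k, ∑ l, π k l * (Mi x k l - Mstar k l) ^ 2 ≤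
        240 * βα * (Lα * R * r + Uα * q) := by
    intro x hx
    set μ := ∑ a, w a * g x a with hμ
    have h1 : ∑ t, (μ - g x (x t)) ≤ f x :=
      MNorm.le_sup (fun i => ∑ t, ((∑ a, w a * g i a) - g i (x t))) x
    have h2 : ∑ t, g x (x t) ≤ 0 := by
      have := (hMhat (fun t => (x t).1) (fun t => (x t).2)).2 Mstar hMs1 hMs2
      simp only [g, Finset.sum_sub_distrib]
      exact sub_nonpos.2 this
    rw [Finset.sum_sub_distrib, Finset.sum_const, Finset.card_univ, Fintype.card_fin,
      nsmul_eq_mul] at h1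
    have hrn : 0 ≤ r := Real.sqrt_nonneg _
    have hqn : 0 ≤ q := Real.sqrt_nonneg _
    have h3 : n * μ ≤ n * (24 * (Lα * R * r + Uα * q)) := by
      have : 0 ≤ n * (Uα * q) := by positivity
      nlinarith
    have h4 : μ ≤ 24 * (Lα * R * r + Uα * q) := le_of_mul_le_mul_left h3 hn'
    have h5 : ∑ k, ∑ l, π k l * (Mi x k l - Mstar k l) ^ 2 ≤ Real.pi ^ 2 * βα * μ := by
      rw [hμ, hsumw, Finset.mul_sum]
      apply Finset.sum_le_sum; intro k _
      rw [Finset.mul_sum]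
      apply Finset.sum_le_sum; intro l _
      have hk := MNorm.kl_lower F α βα hF h01 hd hβb _ _ (hMsI k l) (hMi1 x k l)
      have := mul_le_mul_of_nonneg_left hk (hπ0 k l)
      refine this.trans (le_of_eq ?_)
      simp only [g, MNorm.loss, if_true, Bool.false_eq_true, if_false]
      ring
    have hpi : Real.pi ^ 2 ≤ 10 := by
      have h1 := Real.pi_lt_d2
      have h2 := Real.pi_pos
      nlinarith
    have hB : 0 ≤ Lα * R * r + Uα * q := by positivity
    calc _ ≤ _ := h5
      _ ≤ Real.pi ^ 2 * βα * (24 * (Lα * R * r + Uα * q)) :=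
          mul_le_mul_of_nonneg_left h4 (by positivity)
      _ ≤ 10 * βα * (24 * (Lα * R * r + Uα * q)) := by gcongr
      _ = _ := by ring
  have hfin : ∑ x : Fin n → (Fin d1 × Fin d2) × Bool, ((∏ t, w (x t)) -
      (if s ≤ f x - Ef then ∏ t, w (x t) else 0)) ≥ 1 - δ := by
    rw [Finset.sum_sub_distrib, MNorm.sum_W w hw1 n]
    linarith
  refine le_trans hfin ?_
  apply Finset.sum_le_sum; intro x _
  by_cases hx : s ≤ f x - Ef
  · rw [if_pos hx, sub_self]
    apply Set.indicator_nonneg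
    intro p _
    exact Finset.prod_nonneg fun t _ => hw ((p.1 t, p.2 t))
  · rw [if_neg hx, sub_zero]
    have hg := hgood x (not_le.1 hx)
    rw [Set.indicator_of_mem]
    · exact le_of_eq (hsw x).symm
    · exact hg
end
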